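/- arXiv:2212.09889 — 5 statements merged into one kernel-verified Lean document; each statement's English description precedes it below -/
import Mathlib

section
/- In the Gaussian signal model, for every measurable S ⊆ ℝ with ∫_S φ(u | s_a) du > 0 for all s_a, the map s ↦ E_a(s, S) is continuous and strictly increasing, has a strictly positive limit as s → +∞ and a strictly negative limit as s → −∞; consequently there is a unique real number σ_a(S) with E_a(σ_a(S), S) = 0, and E_a(s, S) < 0 for all s < σ_a(S) while E_a(s, S) > 0 for all s > σ_a(S). (Thus Assumption E.1 holds in the Gaussian model and the myopic best response is a threshold rule: play −1 below σ_a(S) and +1 above it.) -/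
/-!
Completing the square, `phi` at signal `s` is, as a function of `u`, a multiple of the density of the
centred Gaussian `N(0, V)` times the exponential tilt `exp (t u)`, where `t = ρ s / V` and
`ρ = σ² / (σ² + σa²) > 0` is the regression coefficient of `s_b` on `s_a`. Since the posterior mean is affine in the two signals,
`Ea s S = A s + B m(ρ s / V)` with `A, B > 0`, where `m(t)` is the mean of `N(0, V)` restricted to
`S` and tilted by `exp (t u)`. This tilted mean is the derivative of the cumulant generating function
of the restricted measure (`Ea_eq`); that function is analytic, and its second derivative is
a variance, so `m` is continuous and nondecreasing (`continuous_deriv_cgf`, `monotone_deriv_cgf`).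
Hence `Ea` is continuous and strictly increasing. Monotonicity of `m` also gives
`Ea s S ≥ A s + B m(0)` for `s ≥ 0` and the reverse inequality for `s ≤ 0`, so the two limits are
`+∞` and `-∞`; the existence of a zero follows from the intermediate value theorem.
-/

open MeasureTheory Set Filter

noncomputable section

/-- Posterior mean of the state given both signal values in the Gaussian model. -/
def postMean (σ σa σb sa sb : ℝ) : ℝ :=
  σ ^ 2 * (sa * σb ^ 2 + sb * σa ^ 2) / (σa ^ 2 * σb ^ 2 + σ ^ 2 * (σa ^ 2 + σb ^ 2))

/-- Conditional density of player `b`'s signal given player `a`'s signal `sa`. -/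
def phi (σ σa σb sa u : ℝ) : ℝ :=
  Real.exp (-(u - sa * σ ^ 2 / (σ ^ 2 + σa ^ 2)) ^ 2 /
      (2 * ((σa ^ 2 * σb ^ 2 + σ ^ 2 * (σa ^ 2 + σb ^ 2)) / (σ ^ 2 + σa ^ 2)))) /
    Real.sqrt (2 * Real.pi * ((σa ^ 2 * σb ^ 2 + σ ^ 2 * (σa ^ 2 + σb ^ 2)) / (σ ^ 2 + σa ^ 2)))

/-- Conditional expectation of the state given `sa` and the event `s_b ∈ S`. -/
def Ea (σ σa σb : ℝ) (sa : ℝ) (S : Set ℝ) : ℝ :=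
  (∫ u in S, postMean σ σa σb sa u * phi σ σa σb sa u) / ∫ u in S, phi σ σa σb sa u

/-- The same conditional expectation from player `b`'s side. -/
def Eb (σ σa σb : ℝ) (sb : ℝ) (S : Set ℝ) : ℝ :=
  (∫ u in S, postMean σ σa σb u sb * phi σ σb σa sb u) / ∫ u in S, phi σ σb σa sb u

open ProbabilityTheory

section Cgf

variable {μ : Measure ℝ}

lemma continuous_deriv_cgf (h : integrableExpSet id μ = univ) :
    Continuous (deriv (cgf id μ)) := by
  rw [continuous_iff_continuousAt]
  intro t
  exact (analyticAt_cgf (by simp [h])).deriv.continuousAt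

/-- The derivative of the cumulant generating function is monotone, since its own derivative is a
variance under the tilted measure. -/
lemma monotone_deriv_cgf (h : integrableExpSet id μ = univ) :
    Monotone (deriv (cgf id μ)) := by
  apply monotone_of_deriv_nonneg
  · intro t
    exact (analyticAt_cgf (by simp [h])).deriv.differentiableAt
  · intro t
    have h2 := iteratedDeriv_two_cgf_eq_integral (X := id) (μ := μ) (v := t) (by simp [h])
    rw [iteratedDeriv_succ, iteratedDeriv_one] at h2
    rw [h2]
    exact div_nonneg (integral_nonneg fun u => by positivity) mgf_nonneg

end Cgf

lemma integrableExpSet_gaussianReal_restrict (V : NNReal) (S : Set ℝ) :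
    integrableExpSet id ((gaussianReal 0 V).restrict S) = univ := by
  ext t
  simp only [mem_univ, iff_true]
  exact (integrable_exp_mul_gaussianReal t).restrict

/-- The conditional variance of one signal given the other. -/
def condVar (σ σa σb : ℝ) : NNReal :=
  ((σa ^ 2 * σb ^ 2 + σ ^ 2 * (σa ^ 2 + σb ^ 2)) / (σ ^ 2 + σa ^ 2)).toNNReal

lemma coe_condVar (σ σa σb : ℝ) : (condVar σ σa σb : ℝ) =
    (σa ^ 2 * σb ^ 2 + σ ^ 2 * (σa ^ 2 + σb ^ 2)) / (σ ^ 2 + σa ^ 2) :=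
  Real.coe_toNNReal _ (by positivity)

/-- The restriction to `S` of the centred Gaussian whose variance is the conditional variance of
`s_b` given `s_a`. -/
def baseMeasure (σ σa σb : ℝ) (S : Set ℝ) : Measure ℝ :=
  (gaussianReal 0 (condVar σ σa σb)).restrict S

/-- The slope of the tilting parameter as a function of the signal. -/
def tilt (σ σa σb : ℝ) : ℝ := σ ^ 2 / (σ ^ 2 + σa ^ 2) / condVar σ σa σb

/-- Conditional expectations given `s` are exponential tilts of one fixed measure. -/
lemma setIntegral_mul_phi {σ σa σb : ℝ} (hσ : 0 < σ) (hσa : 0 < σa)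
    {S : Set ℝ} (hS : MeasurableSet S) (s : ℝ) :
    ∃ c : ℝ, 0 < c ∧ ∀ f : ℝ → ℝ, ∫ u in S, f u * phi σ σa σb s u =
      c * ∫ u, f u * Real.exp (tilt σ σa σb * s * u) ∂(baseMeasure σ σa σb S) := by
  have hV := coe_condVar σ σa σb
  have hVpos : 0 < (condVar σ σa σb : ℝ) := by rw [hV]; positivity
  have hV0 : condVar σ σa σb ≠ 0 := fun h => by simp [h] at hVpos
  refine ⟨Real.exp (-(s * σ ^ 2 / (σ ^ 2 + σa ^ 2)) ^ 2 / (2 * condVar σ σa σb)),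
    Real.exp_pos _, fun f => ?_⟩
  rw [baseMeasure, gaussianReal_of_var_ne_zero _ hV0,
    setIntegral_withDensity_eq_setIntegral_toReal_smul (measurable_gaussianPDF _ _)
      (Eventually.of_forall fun _ => gaussianPDF_lt_top) _ hS, ← integral_const_mul]
  refine integral_congr_ae (Eventually.of_forall fun u => ?_)
  simp only [toReal_gaussianPDF, gaussianPDFReal, smul_eq_mul, phi, ← hV, tilt]
  -- completing the square in the exponent
  have hexp : -(u - s * σ ^ 2 / (σ ^ 2 + σa ^ 2)) ^ 2 / (2 * (condVar σ σa σb : ℝ)) =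
      -(s * σ ^ 2 / (σ ^ 2 + σa ^ 2)) ^ 2 / (2 * condVar σ σa σb) +
      (-(u - 0) ^ 2 / (2 * condVar σ σa σb) +
        σ ^ 2 / (σ ^ 2 + σa ^ 2) / condVar σ σa σb * s * u) := by
    have : σ ^ 2 + σa ^ 2 ≠ 0 := by positivity
    field_simp
    ring
  rw [hexp, Real.exp_add, Real.exp_add]
  ring

/-- The conditional expectation is affine in the signal and in the tilted mean, the latter being
the derivative of the cumulant generating function of `baseMeasure`. -/
lemma Ea_eq {σ σa σb : ℝ} (hσ : 0 < σ) (hσa : 0 < σa)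
    {S : Set ℝ} (hS : MeasurableSet S) (s : ℝ) (hpos : 0 < ∫ u in S, phi σ σa σb s u) :
    Ea σ σa σb s S =
      σ ^ 2 * σb ^ 2 / (σa ^ 2 * σb ^ 2 + σ ^ 2 * (σa ^ 2 + σb ^ 2)) * s +
      σ ^ 2 * σa ^ 2 / (σa ^ 2 * σb ^ 2 + σ ^ 2 * (σa ^ 2 + σb ^ 2)) *
        deriv (cgf id (baseMeasure σ σa σb S)) (tilt σ σa σb * s) := by
  obtain ⟨c, hc, hcf⟩ := setIntegral_mul_phi (σb := σb) hσ hσa hS s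
  have hset : integrableExpSet id (baseMeasure σ σa σb S) = univ :=
    integrableExpSet_gaussianReal_restrict _ _
  have hden := hcf (fun _ => 1)
  simp only [one_mul] at hden
  have hmem : tilt σ σa σb * s ∈ interior (integrableExpSet id (baseMeasure σ σa σb S)) := by
    simp [hset]
  have hI0 : Integrable (fun u : ℝ => Real.exp (tilt σ σa σb * s * u)) (baseMeasure σ σa σb S) :=
    interior_subset (s := integrableExpSet id (baseMeasure σ σa σb S)) hmem
  have hI1 : Integrable (fun u : ℝ => u * Real.exp (tilt σ σa σb * s * u))
      (baseMeasure σ σa σb S) := by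
    simpa using integrable_pow_mul_exp_of_mem_interior_integrableExpSet hmem 1
  rw [Ea, hcf, hden, deriv_cgf hmem, mgf]
  simp only [id]
  rw [hden] at hpos
  have hI : 0 < ∫ u, Real.exp (tilt σ σa σb * s * u) ∂(baseMeasure σ σa σb S) :=
    pos_of_mul_pos_right hpos hc.le
  have hnum : ∫ u, postMean σ σa σb s u * Real.exp (tilt σ σa σb * s * u)
        ∂(baseMeasure σ σa σb S) =
      σ ^ 2 * σb ^ 2 / (σa ^ 2 * σb ^ 2 + σ ^ 2 * (σa ^ 2 + σb ^ 2)) * s *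
        (∫ u, Real.exp (tilt σ σa σb * s * u) ∂(baseMeasure σ σa σb S)) +
      σ ^ 2 * σa ^ 2 / (σa ^ 2 * σb ^ 2 + σ ^ 2 * (σa ^ 2 + σb ^ 2)) *
        ∫ u, u * Real.exp (tilt σ σa σb * s * u) ∂(baseMeasure σ σa σb S) := by
    rw [← integral_const_mul, ← integral_const_mul,
      ← integral_add (hI0.const_mul _) (hI1.const_mul _)]
    congr with u
    rw [postMean]
    ring
  rw [hnum, mul_div_mul_left _ _ hc.ne', add_div, mul_div_cancel_right₀ _ hI.ne',
    mul_div_assoc (σ ^ 2 * σa ^ 2 / _)]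

/-- in the Gaussian model, for every measurable `S` of positive conditional
probability, `s ↦ Ea s S` is continuous and strictly increasing, has a strictly positive
limit at `+∞` and a strictly negative limit at `-∞` (limits taken in `EReal`, allowing
`±∞`); consequently it has a unique zero `σ_a(S)`, negative below it and positive above. -/
theorem stmt5 (σ σa σb : ℝ) (hσ : 0 < σ) (hσa : 0 < σa) (hσb : 0 < σb)
    (S : Set ℝ) (hS : MeasurableSet S)
    (hpos : ∀ sa : ℝ, 0 < ∫ u in S, phi σ σa σb sa u) :
    Continuous (fun s => Ea σ σa σb s S) ∧
    StrictMono (fun s => Ea σ σa σb s S) ∧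
    (∃ L : EReal, 0 < L ∧
      Tendsto (fun s => ((Ea σ σa σb s S : ℝ) : EReal)) atTop (nhds L)) ∧
    (∃ L : EReal, L < 0 ∧
      Tendsto (fun s => ((Ea σ σa σb s S : ℝ) : EReal)) atBot (nhds L)) ∧
    (∃! r : ℝ, Ea σ σa σb r S = 0) ∧
    (∀ r s : ℝ, Ea σ σa σb r S = 0 →
      (s < r → Ea σ σa σb s S < 0) ∧ (r < s → 0 < Ea σ σa σb s S)) := by
  obtain ⟨A, hA⟩ : ∃ A, A = σ ^ 2 * σb ^ 2 / (σa ^ 2 * σb ^ 2 + σ ^ 2 * (σa ^ 2 + σb ^ 2)) := ⟨_, rfl⟩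
  obtain ⟨B, hB⟩ : ∃ B, B = σ ^ 2 * σa ^ 2 / (σa ^ 2 * σb ^ 2 + σ ^ 2 * (σa ^ 2 + σb ^ 2)) := ⟨_, rfl⟩
  have hApos : 0 < A := by rw [hA]; positivity
  have hBpos : 0 < B := by rw [hB]; positivity
  have hk : 0 ≤ tilt σ σa σb := by rw [tilt]; positivity
  have hset : integrableExpSet id (baseMeasure σ σa σb S) = univ :=
    integrableExpSet_gaussianReal_restrict _ _
  obtain ⟨m, hm⟩ : ∃ m : ℝ → ℝ,
      m = fun s => deriv (cgf id (baseMeasure σ σa σb S)) (tilt σ σa σb * s) := ⟨_, rfl⟩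
  have hmc : Continuous m := by
    rw [hm]; exact (continuous_deriv_cgf hset).comp (continuous_const_mul _)
  have hmm : Monotone m := by
    rw [hm]; exact (monotone_deriv_cgf hset).comp (monotone_mul_left_of_nonneg hk)
  have hE : ∀ s, Ea σ σa σb s S = A * s + B * m s := fun s => by
    rw [Ea_eq hσ hσa hS s (hpos s), hA, hB, hm]
  simp only [hE]
  have hcont : Continuous fun s => A * s + B * m s := by fun_prop
  have hmono : StrictMono fun s => A * s + B * m s := fun x y hxy =>
    add_lt_add_of_lt_of_le (mul_lt_mul_of_pos_left hxy hApos)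
      (mul_le_mul_of_nonneg_left (hmm hxy.le) hBpos.le)
  have htop : Tendsto (fun s => A * s + B * m s) atTop atTop := by
    refine tendsto_atTop_mono' _ ?_
      (tendsto_atTop_add_const_right _ (B * m 0) (tendsto_id.const_mul_atTop hApos))
    filter_upwards [eventually_ge_atTop 0] with s hs
    have := mul_le_mul_of_nonneg_left (hmm hs) hBpos.le
    simpa using this
  have hbot : Tendsto (fun s => A * s + B * m s) atBot atBot := by
    refine tendsto_atBot_mono' _ ?_
      (tendsto_atBot_add_const_right _ (B * m 0) (tendsto_id.const_mul_atBot hApos))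
    filter_upwards [eventually_le_atBot 0] with s hs
    have := mul_le_mul_of_nonneg_left (hmm hs) hBpos.le
    simpa using this
  refine ⟨hcont, hmono, ⟨⊤, EReal.zero_lt_top, EReal.tendsto_coe_nhds_top_iff.2 htop⟩,
    ⟨⊥, EReal.bot_lt_zero, EReal.tendsto_coe_nhds_bot_iff.2 hbot⟩, ?_, ?_⟩
  · obtain ⟨r, hr⟩ := hcont.surjective htop hbot 0
    exact ⟨r, hr, fun y hy => hmono.injective (hy.trans hr.symm)⟩
  · intro r s hr
    exact ⟨fun h => (hmono h).trans_eq hr, fun h => hr.symm.trans_lt (hmono h)⟩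
end
end

section
/- In the Gaussian signal model with the myopic-play dynamics: let S_a, S_b be nondegenerate closed intervals with myopic thresholds m_a = σ_a(S_b), m_b = σ_b(S_a), and suppose both players play +1 (so m_i < sup S_i for i = a, b and the updated belief sets are S'_i = [max{inf S_i, m_i}, sup S_i]). Then the updated thresholds m'_a = σ_a(S'_b) and m'_b = σ_b(S'_a) satisfy m'_i ≤ m_i ≤ inf S'_i for both i; consequently no further belief updates occur and any pair of types (s_a, s_b) with s_a > m_a and s_b > m_b plays +1 at all subsequent dates. The analogous statement holds for common play of −1. -/
/-!
Everything reduces to one monotonicity fact for truncated intervals: raising the lower endpoint of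
the opponent's belief interval cannot raise the myopic threshold (`threshold_antitone_left`).

Up to a positive denominator, `Ea s [l, u]` is `∫_l^u f_s(x) φ(x | s) dx`, where `f_s = postMean s`
is affine and increasing in both `s` and `x`. Suppose this integral vanishes, let `c` be the zero of
`f_s`, and take `l ≤ l'` and `s < s'`.
* The integral over `[l', u]` is still nonnegative, because the discarded part `[l, l']` either has
  a nonpositive integrand or leaves a nonnegative one (`integral_postMean_nonneg`).
* By the monotone likelihood ratio property (`phi_mul_phi_le`), `φ(x | s') / φ(x | s)` is
  nondecreasing in `x`; its value at `c` therefore bounds the reweighting of `f_s` from below,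
  so `∫_{l'}^u f_s φ(· | s')` is nonnegative too.
* Replacing `f_s` by the strictly larger `f_{s'}` makes it positive.

Hence the threshold for `[l', u]` cannot exceed that for `[l, u]`. The statement for upper endpoints
follows by the reflection `x ↦ -x`, and player `b`'s by exchanging `σa` and `σb`.
-/

open MeasureTheory Set Filter

noncomputable section

section

variable {σ σa σb : ℝ}

lemma postMean_continuous (s : ℝ) : Continuous (postMean σ σa σb s) := by
  unfold postMean; fun_prop

lemma phi_continuous (s : ℝ) : Continuous (phi σ σa σb s) := by
  unfold phi; fun_prop

lemma phi_pos (hσ : 0 < σ) (hσa : 0 < σa) (hσb : 0 < σb) (s x : ℝ) : 0 < phi σ σa σb s x := by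
  unfold phi
  have := Real.pi_pos
  positivity

lemma postMean_lt_left (hσ : 0 < σ) (hσa : 0 < σa) (hσb : 0 < σb) {s s' : ℝ} (h : s < s') (x : ℝ) :
    postMean σ σa σb s x < postMean σ σa σb s' x := by
  unfold postMean
  gcongr

lemma postMean_mono_right (hσ : 0 < σ) (hσa : 0 < σa) (hσb : 0 < σb) (s : ℝ) :
    Monotone (postMean σ σa σb s) := by
  intro x y h
  unfold postMean
  gcongr

lemma exists_postMean_eq_zero (hσa : 0 < σa) (s : ℝ) : ∃ c, postMean σ σa σb s c = 0 := by
  refine ⟨-(s * σb ^ 2 / σa ^ 2), ?_⟩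
  have : s * σb ^ 2 + -(s * σb ^ 2 / σa ^ 2) * σa ^ 2 = 0 := by field_simp; ring
  rw [postMean, this]; simp

/-- The monotone likelihood ratio property of the signals. -/
lemma phi_mul_phi_le (hσ : 0 < σ) (hσa : 0 < σa) (hσb : 0 < σb) {s s' x y : ℝ}
    (hs : s ≤ s') (hx : x ≤ y) :
    phi σ σa σb s' x * phi σ σa σb s y ≤ phi σ σa σb s' y * phi σ σa σb s x := by
  unfold phi
  set V := (σa ^ 2 * σb ^ 2 + σ ^ 2 * (σa ^ 2 + σb ^ 2)) / (σ ^ 2 + σa ^ 2) with hV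
  have hVpos : 0 < V := by positivity
  have hk : 0 ≤ σ ^ 2 / (σ ^ 2 + σa ^ 2) := by positivity
  set k := σ ^ 2 / (σ ^ 2 + σa ^ 2) with hk'
  rw [mul_div_assoc, mul_div_assoc, ← hk']
  rw [div_mul_div_comm, div_mul_div_comm, ← Real.exp_add, ← Real.exp_add, ← add_div, ← add_div]
  refine div_le_div_of_nonneg_right (Real.exp_le_exp.2 (div_le_div_of_nonneg_right ?_ ?_)) ?_
  rotate_left
  · positivity
  · positivity
  nlinarith [mul_nonneg hk (mul_nonneg (sub_nonneg.2 hs) (sub_nonneg.2 hx))]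

/-- `Ea` vanishes on a nondegenerate interval only when its numerator does, the conditional
probability of the interval being positive. -/
lemma integral_eq_zero_of_Ea (hσ : 0 < σ) (hσa : 0 < σa) (hσb : 0 < σb) {s l u : ℝ} (hlu : l < u)
    (h : Ea σ σa σb s (Icc l u) = 0) :
    ∫ x in l..u, postMean σ σa σb s x * phi σ σa σb s x = 0 := by
  unfold Ea at h
  rw [integral_Icc_eq_integral_Ioc, integral_Icc_eq_integral_Ioc,
    ← intervalIntegral.integral_of_le hlu.le, ← intervalIntegral.integral_of_le hlu.le] at h
  have hden : 0 < ∫ x in l..u, phi σ σa σb s x :=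
    intervalIntegral.intervalIntegral_pos_of_pos ((phi_continuous s).intervalIntegrable _ _)
      (fun x => phi_pos hσ hσa hσb s x) hlu
  exact (div_eq_zero_iff.1 h).resolve_right (ne_of_gt hden)

/-- Cutting off low signals keeps a vanishing numerator nonnegative. -/
lemma integral_postMean_nonneg (hσ : 0 < σ) (hσa : 0 < σa) (hσb : 0 < σb) {s l l' u : ℝ}
    (hl : l ≤ l') (hu : l' ≤ u)
    (h : ∫ x in l..u, postMean σ σa σb s x * phi σ σa σb s x = 0) :
    0 ≤ ∫ x in l'..u, postMean σ σa σb s x * phi σ σa σb s x := by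
  have hint (p q : ℝ) :
      IntervalIntegrable (fun x => postMean σ σa σb s x * phi σ σa σb s x) volume p q :=
    ((postMean_continuous s).mul (phi_continuous s)).intervalIntegrable p q
  have hmono := postMean_mono_right hσ hσa hσb s
  rcases le_total 0 (postMean σ σa σb s l') with h0 | h0
  · exact intervalIntegral.integral_nonneg hu fun x hx =>
      mul_nonneg (h0.trans (hmono hx.1)) (phi_pos hσ hσa hσb s x).le
  · have hneg : 0 ≤ ∫ x in l..l', -(postMean σ σa σb s x * phi σ σa σb s x) :=
      intervalIntegral.integral_nonneg hl fun x hx => neg_nonneg.2 <|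
        mul_nonpos_of_nonpos_of_nonneg ((hmono hx.2).trans h0) (phi_pos hσ hσa hσb s x).le
    rw [intervalIntegral.integral_neg] at hneg
    have hsplit := intervalIntegral.integral_add_adjacent_intervals (hint l l') (hint l' u)
    linarith only [hsplit, hneg, h]

/-- Raising the lower endpoint of the opponent's belief interval weakly lowers the threshold. -/
lemma threshold_antitone_left (hσ : 0 < σ) (hσa : 0 < σa) (hσb : 0 < σb) {s s' l l' u : ℝ}
    (hl : l ≤ l') (hu : l' < u) (h : Ea σ σa σb s (Icc l u) = 0)
    (h' : Ea σ σa σb s' (Icc l' u) = 0) : s' ≤ s := by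
  by_contra! hs
  have h1 := integral_postMean_nonneg hσ hσa hσb hl hu.le
    (integral_eq_zero_of_Ea hσ hσa hσb (hl.trans_lt hu) h)
  have h2 := integral_eq_zero_of_Ea hσ hσa hσb hu h'
  obtain ⟨c, hc⟩ := exists_postMean_eq_zero (σ := σ) (σb := σb) hσa s
  have hmono := postMean_mono_right hσ hσa hσb s
  -- The likelihood ratio is compared with its value at `c`; cross-multiplied to avoid division.
  have hpt (x : ℝ) : phi σ σa σb s' c * (postMean σ σa σb s x * phi σ σa σb s x) <
      phi σ σa σb s c * (postMean σ σa σb s' x * phi σ σa σb s' x) := by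
    have hlt : phi σ σa σb s c * phi σ σa σb s' x * postMean σ σa σb s x <
        phi σ σa σb s c * phi σ σa σb s' x * postMean σ σa σb s' x :=
      mul_lt_mul_of_pos_left (postMean_lt_left hσ hσa hσb hs x)
        (mul_pos (phi_pos hσ hσa hσb s c) (phi_pos hσ hσa hσb s' x))
    rcases le_total c x with hx | hx
    · have hf := hmono hx
      rw [hc] at hf
      nlinarith [mul_le_mul_of_nonneg_left (phi_mul_phi_le hσ hσa hσb hs.le hx) hf]
    · have hf := hmono hx
      rw [hc] at hf
      nlinarith [mul_le_mul_of_nonpos_left (phi_mul_phi_le hσ hσa hσb hs.le hx) hf]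
  have hc1 : Continuous fun x => phi σ σa σb s' c * (postMean σ σa σb s x * phi σ σa σb s x) :=
    continuous_const.mul ((postMean_continuous s).mul (phi_continuous s))
  have hc2 : Continuous fun x => phi σ σa σb s c * (postMean σ σa σb s' x * phi σ σa σb s' x) :=
    continuous_const.mul ((postMean_continuous s').mul (phi_continuous s'))
  have hlt := intervalIntegral.integral_lt_integral_of_continuousOn_of_le_of_exists_lt hu
    hc1.continuousOn hc2.continuousOn (fun x _ => (hpt x).le) ⟨u, ⟨hu.le, le_rfl⟩, hpt u⟩
  rw [intervalIntegral.integral_const_mul, intervalIntegral.integral_const_mul, h2, mul_zero] at hlt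
  exact absurd (mul_nonneg (phi_pos hσ hσa hσb s' c).le h1) (not_le.2 hlt)

/-- The model is symmetric under reflection of the state and the signals. -/
lemma Ea_neg_eq_zero (hσ : 0 < σ) (hσa : 0 < σa) (hσb : 0 < σb) {s l u : ℝ} (hlu : l < u)
    (h : Ea σ σa σb s (Icc l u) = 0) : Ea σ σa σb (-s) (Icc (-u) (-l)) = 0 := by
  have h0 := integral_eq_zero_of_Ea hσ hσa hσb hlu h
  have hphi (x : ℝ) : phi σ σa σb (-s) x = phi σ σa σb s (-x) := by
    unfold phi
    congr 4
    ring
  have hpm (x : ℝ) : postMean σ σa σb (-s) x = -postMean σ σa σb s (-x) := by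
    unfold postMean
    ring
  unfold Ea
  rw [integral_Icc_eq_integral_Ioc, ← intervalIntegral.integral_of_le (neg_le_neg hlu.le)]
  simp only [hphi, hpm, neg_mul]
  rw [intervalIntegral.integral_neg,
    intervalIntegral.integral_comp_neg fun x => postMean σ σa σb s x * phi σ σa σb s x]
  simp [h0]

/-- Lowering the upper endpoint of the opponent's belief interval weakly raises the threshold. -/
lemma threshold_antitone_right (hσ : 0 < σ) (hσa : 0 < σa) (hσb : 0 < σb) {s s' l u u' : ℝ}
    (hu : u' ≤ u) (hl : l < u') (h : Ea σ σa σb s (Icc l u) = 0)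
    (h₂ : Ea σ σa σb s' (Icc l u') = 0) : s ≤ s' :=
  neg_le_neg_iff.1 <| threshold_antitone_left hσ hσa hσb (neg_le_neg hu) (neg_lt_neg hl)
    (Ea_neg_eq_zero hσ hσa hσb (hl.trans_le hu) h) (Ea_neg_eq_zero hσ hσa hσb hl h₂)

/-- Player `b`'s conditional expectation is player `a`'s with the noise levels exchanged. -/
lemma Eb_eq_Ea (s : ℝ) (S : Set ℝ) : Eb σ σa σb s S = Ea σ σb σa s S := by
  have hpm (x : ℝ) : postMean σ σa σb x s = postMean σ σb σa s x := by
    unfold postMean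
    congr 1 <;> ring
  simp only [Eb, Ea, hpm]

end

/-- under the myopic-play dynamics with belief sets `S_a = [la, ua]`,
`S_b = [lb, ub]` and thresholds `m_a = σ_a(S_b)`, `m_b = σ_b(S_a)`, common play of `+1`
(possible iff `m_a < ua` and `m_b < ub`) leads to updated sets
`S'_a = [max la m_a, ua]`, `S'_b = [max lb m_b, ub]` whose new thresholds satisfy
`m'_i ≤ m_i ≤ inf S'_i`; hence no further belief updates occur and any type pair with
`s_a > m_a`, `s_b > m_b` plays `+1` at all subsequent dates.  The analogous statement
holds for common play of `-1` (second conjunct). -/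
theorem stmt7 (σ σa σb : ℝ) (hσ : 0 < σ) (hσa : 0 < σa) (hσb : 0 < σb)
    (la ua lb ub ma mb : ℝ) (hSa : la < ua) (hSb : lb < ub)
    (hma : Ea σ σa σb ma (Icc lb ub) = 0) (hmb : Eb σ σa σb mb (Icc la ua) = 0) :
    (ma < ua → mb < ub → ∀ m'a m'b : ℝ,
      Ea σ σa σb m'a (Icc (max lb mb) ub) = 0 →
      Eb σ σa σb m'b (Icc (max la ma) ua) = 0 →
      m'a ≤ ma ∧ m'b ≤ mb ∧ ma ≤ max la ma ∧ mb ≤ max lb mb ∧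
      Icc (max la ma) ua ∩ Ici m'a = Icc (max la ma) ua ∧
      Icc (max lb mb) ub ∩ Ici m'b = Icc (max lb mb) ub ∧
      (∀ sa sb : ℝ, ma < sa → mb < sb → m'a < sa ∧ m'b < sb)) ∧
    (la < ma → lb < mb → ∀ m'a m'b : ℝ,
      Ea σ σa σb m'a (Icc lb (min mb ub)) = 0 →
      Eb σ σa σb m'b (Icc la (min ma ua)) = 0 →
      ma ≤ m'a ∧ mb ≤ m'b ∧ min ma ua ≤ ma ∧ min mb ub ≤ mb ∧
      Icc la (min ma ua) ∩ Iic m'a = Icc la (min ma ua) ∧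
      Icc lb (min mb ub) ∩ Iic m'b = Icc lb (min mb ub) ∧
      (∀ sa sb : ℝ, sa < ma → sb < mb → sa < m'a ∧ sb < m'b)) := by
  rw [Eb_eq_Ea] at hmb
  constructor
  · intro ha hb m'a m'b h1 h2
    rw [Eb_eq_Ea] at h2
    have h1 := threshold_antitone_left hσ hσa hσb (le_max_left lb mb) (max_lt hSb hb) hma h1
    have h2 := threshold_antitone_left hσ hσb hσa (le_max_left la ma) (max_lt hSa ha) hmb h2
    refine ⟨h1, h2, le_max_right _ _, le_max_right _ _, ?_, ?_,
      fun sa sb hsa hsb => ⟨h1.trans_lt hsa, h2.trans_lt hsb⟩⟩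
    · exact inter_eq_left.2 fun x hx => h1.trans ((le_max_right _ _).trans hx.1)
    · exact inter_eq_left.2 fun x hx => h2.trans ((le_max_right _ _).trans hx.1)
  · intro ha hb m'a m'b h1 h2
    rw [Eb_eq_Ea] at h2
    have h1 := threshold_antitone_right hσ hσa hσb (min_le_right mb ub) (lt_min hb hSb) hma h1
    have h2 := threshold_antitone_right hσ hσb hσa (min_le_right ma ua) (lt_min ha hSa) hmb h2
    refine ⟨h1, h2, min_le_left _ _, min_le_left _ _, ?_, ?_,
      fun sa sb hsa hsb => ⟨hsa.trans_le h1, hsb.trans_le h2⟩⟩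
    · exact inter_eq_left.2 fun x hx => (hx.2.trans (min_le_left _ _)).trans h1
    · exact inter_eq_left.2 fun x hx => (hx.2.trans (min_le_left _ _)).trans h2
end
end

section
/- In the Gaussian signal model with σ_a = σ_b, for any m ∈ ℝ: if s_a > m, then E_a(s_a, S') > 0 for every measurable S' ⊆ [−m, ∞) with ∫_{S'} φ(u | s_a) du > 0. In particular, if player a's type exceeds m and she is certain that s_b ≥ −m, then the action +1 maximizes her current-period expected payoff at every subsequent date, no matter how her belief set about s_b is further truncated within [−m, ∞). -/
/-!
When `σ_a = σ_b` the posterior mean is `postMean = c * (s_a + u)` with `c > 0`, so on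
`S' ⊆ [-m, ∞)` it is bounded below by the constant `c * (s_a - m) > 0`. Integrating against the
nonnegative density `phi` keeps this bound. The Bochner integral in the numerator is monotone
only for integrable functions, so integrability of `postMean * phi` is needed as well; it reduces
to that of `exp (-b * x ^ 2)` and `x * exp (-b * x ^ 2)` after centring at the conditional mean.
-/

open MeasureTheory Set Filter

noncomputable section

lemma phi_nonneg (σ σa σb sa u : ℝ) : 0 ≤ phi σ σa σb sa u := by
  unfold phi
  positivity

/-- An affine function times the conditional density is integrable. The density is the constant
`(√(2πV))⁻¹` times `exp (-(2V)⁻¹ * (u - μ) ^ 2)`, with `μ` and `V` the conditional mean and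
variance of `s_b` given `s_a`. -/
lemma integrable_affine_mul_phi {σ σa σb : ℝ} (hσ : 0 < σ) (hσa : 0 < σa) (hσb : 0 < σb)
    (sa p q : ℝ) : Integrable (fun u => (p * u + q) * phi σ σa σb sa u) := by
  set V := (σa ^ 2 * σb ^ 2 + σ ^ 2 * (σa ^ 2 + σb ^ 2)) / (σ ^ 2 + σa ^ 2) with hV
  set μ := sa * σ ^ 2 / (σ ^ 2 + σa ^ 2) with hμ
  have hVpos : 0 < V := by positivity
  have hb : 0 < (2 * V)⁻¹ := by positivity
  have h₁ := ((integrable_mul_exp_neg_mul_sq hb).comp_sub_right μ).const_mul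
    (p * (Real.sqrt (2 * Real.pi * V))⁻¹)
  have h₀ := ((integrable_exp_neg_mul_sq hb).comp_sub_right μ).const_mul
    ((p * μ + q) * (Real.sqrt (2 * Real.pi * V))⁻¹)
  refine (h₁.add h₀).congr (Eventually.of_forall fun u => ?_)
  have hexp : -(u - μ) ^ 2 / (2 * V) = -(2 * V)⁻¹ * (u - μ) ^ 2 := by ring
  simp only [Pi.add_apply, phi, ← hV, ← hμ, hexp]
  ring

lemma postMean_symm {σ σa : ℝ} (hσa : 0 < σa) (sa u : ℝ) :
    postMean σ σa σa sa u = σ ^ 2 / (σa ^ 2 + 2 * σ ^ 2) * (sa + u) := by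
  have : 0 < σa ^ 2 + 2 * σ ^ 2 := by positivity
  have : 0 < σa ^ 2 * σa ^ 2 + σ ^ 2 * (σa ^ 2 + σa ^ 2) := by positivity
  unfold postMean
  field_simp
  ring

/-- in the symmetric Gaussian case `σ_a = σ_b`, if `s_a > m` then the
posterior expectation of the state is strictly positive conditional on any
positive-probability measurable subset `S' ⊆ [-m, ∞)` of opponent types; so `+1` stays
myopically optimal no matter how the belief set is further truncated within `[-m, ∞)`. -/
theorem stmt11 (σ σa : ℝ) (hσ : 0 < σ) (hσa : 0 < σa) (m sa : ℝ) (hsa : m < sa) :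
    ∀ S' : Set ℝ, S' ⊆ Ici (-m) → MeasurableSet S' →
      0 < (∫ u in S', phi σ σa σa sa u) → 0 < Ea σ σa σa sa S' := by
  intro S' hS' hmeas hpos
  refine div_pos ?_ hpos
  set c := σ ^ 2 / (σa ^ 2 + 2 * σ ^ 2) with hc
  have hcpos : 0 < c := by positivity
  have hphi : Integrable (phi σ σa σa sa) := by
    simpa using integrable_affine_mul_phi hσ hσa hσa sa 0 1
  have hint : Integrable (fun u => postMean σ σa σa sa u * phi σ σa σa sa u) := by
    refine (integrable_affine_mul_phi hσ hσa hσa sa c (c * sa)).congr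
      (Eventually.of_forall fun u => ?_)
    simp only [postMean_symm hσa, ← hc]
    ring
  calc 0 < c * (sa - m) * ∫ u in S', phi σ σa σa sa u :=
        mul_pos (mul_pos hcpos (sub_pos.2 hsa)) hpos
    _ = ∫ u in S', c * (sa - m) * phi σ σa σa sa u := (integral_const_mul _ _).symm
    _ ≤ ∫ u in S', postMean σ σa σa sa u * phi σ σa σa sa u := by
        refine setIntegral_mono_on (hphi.const_mul _).integrableOn hint.integrableOn hmeas
          fun u hu => mul_le_mul_of_nonneg_right ?_ (phi_nonneg _ _ _ _ _)
        have hu' : -m ≤ u := hS' hu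
        rw [postMean_symm hσa, ← hc]
        exact mul_le_mul_of_nonneg_left (by linarith) hcpos.le
end
end

section
/- In the Gaussian signal model, the threshold σ_a([0, ∞)) — the unique zero of s ↦ E_a(s, [0, ∞)) — is strictly negative, and the threshold σ_b((−∞, 0]) is strictly positive. Moreover, if σ_a = σ_b (the symmetric case), then σ_b((−∞, 0]) = −σ_a([0, ∞)), and consequently e(σ_a([0, ∞)), σ_b((−∞, 0])) = 0. -/
/-!
Write `B = σb²`, `A = σa²`. Up to positive factors, `E_a(s, [0, ∞))` is
`F(s) = ∫_{u > 0} (s B + u A) exp (-b u² + c s u) du` with constants `b, c > 0` depending only on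
the three variances. Let `I(q, t) = ∫_{u > 0} exp (-q u² + t u) du`. Integration by parts removes
the factor `u`, and `F(s) = 0` becomes `s (2 b B + A c) I(b, c s) + A = 0`.

The second summand is positive, so a zero `s` is negative; write `s = -x`. The substitution
`w = x u` turns the equation into `(2 b B + A c) I(b / x², -c) = A`, where `x` now enters only
through `q = b / x²`. The function `q ↦ I(q, -c)` is continuous and strictly decreasing on
`[0, ∞)`, from `1 / c` down to `0`, and `A / (2 b B + A c)` lies strictly between these values, so
exactly one `q > 0`, hence exactly one `s`, solves it.

The reflection `u ↦ -u` gives `E_b(s, (-∞, 0]) = -E_a(-s, [0, ∞))` with the roles of the players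
exchanged on the right, which settles the second player and the symmetric case.
-/

open MeasureTheory Set Filter

noncomputable section

/-- The half-line Gaussian integral `∫_{u > 0} exp (-q u² + t u) du`. It converges when `q > 0`, and
also when `q = 0` and `t < 0`. -/
def halfGauss (q t : ℝ) : ℝ := ∫ u in Ioi (0 : ℝ), Real.exp (-q * u ^ 2 + t * u)

lemma exp_quadratic_eq {q : ℝ} (hq : 0 < q) (t u : ℝ) :
    Real.exp (-q * u ^ 2 + t * u) =
      Real.exp (t ^ 2 / (4 * q)) * Real.exp (-q * (u - t / (2 * q)) ^ 2) := by
  rw [← Real.exp_add]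
  congr 1
  field_simp
  ring

lemma integrable_exp_quadratic {q : ℝ} (hq : 0 < q) (t : ℝ) :
    Integrable (fun u : ℝ => Real.exp (-q * u ^ 2 + t * u)) := by
  simp_rw [exp_quadratic_eq hq t]
  exact ((integrable_exp_neg_mul_sq hq).comp_sub_right (t / (2 * q))).const_mul _

lemma integrable_mul_exp_quadratic {q : ℝ} (hq : 0 < q) (t : ℝ) :
    Integrable (fun u : ℝ => u * Real.exp (-q * u ^ 2 + t * u)) := by
  have h1 := ((integrable_mul_exp_neg_mul_sq hq).comp_sub_right (t / (2 * q))).const_mul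
    (Real.exp (t ^ 2 / (4 * q)))
  have h2 := (integrable_exp_quadratic hq t).const_mul (t / (2 * q))
  refine (h1.add h2).congr (ae_of_all _ fun u => ?_)
  simp only [Pi.add_apply, exp_quadratic_eq hq t]
  ring

lemma halfGauss_pos {q : ℝ} (hq : 0 < q) (t : ℝ) : 0 < halfGauss q t := by
  unfold halfGauss
  rw [setIntegral_pos_iff_support_of_nonneg_ae (ae_of_all _ fun u => (Real.exp_pos _).le)
    (integrable_exp_quadratic hq t).integrableOn]
  have : Function.support (fun u : ℝ => Real.exp (-q * u ^ 2 + t * u)) = univ := by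
    ext u; simp [(Real.exp_pos _).ne']
  rw [this, univ_inter]
  simp

lemma integral_mul_exp_quadratic {q : ℝ} (hq : 0 < q) (t : ℝ) :
    ∫ u in Ioi (0 : ℝ), u * Real.exp (-q * u ^ 2 + t * u) =
      (1 + t * halfGauss q t) / (2 * q) := by
  have hu := (integrable_mul_exp_quadratic hq t).integrableOn (s := Ioi 0)
  have h1 := (integrable_exp_quadratic hq t).integrableOn (s := Ioi 0)
  have hlim : Tendsto (fun u : ℝ => -Real.exp (-q * u ^ 2 + t * u)) atTop (nhds 0) := by
    rw [← neg_zero]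
    refine (Real.tendsto_exp_atBot.comp ?_).neg
    have h : Tendsto (fun u : ℝ => u * (q * u - t)) atTop atTop :=
      tendsto_id.atTop_mul_atTop₀
        (tendsto_atTop_add_const_right _ (-t) (tendsto_id.const_mul_atTop hq))
    refine (tendsto_neg_atTop_atBot.comp h).congr fun u => ?_
    simp only [Function.comp]
    ring
  have hderiv : ∀ x ∈ Ici (0 : ℝ), HasDerivAt (fun u : ℝ => -Real.exp (-q * u ^ 2 + t * u))
      (2 * q * (x * Real.exp (-q * x ^ 2 + t * x)) - t * Real.exp (-q * x ^ 2 + t * x)) x := by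
    intro x _
    have h := ((((hasDerivAt_id x).pow 2).const_mul (-q)).add
      ((hasDerivAt_id x).const_mul t)).exp.neg
    refine h.congr_deriv ?_
    simp
    ring
  have key := integral_Ioi_of_hasDerivAt_of_tendsto' hderiv
    ((hu.const_mul (2 * q)).sub (h1.const_mul t)) hlim
  rw [integral_sub (hu.const_mul (2 * q)) (h1.const_mul t), integral_const_mul,
    integral_const_mul] at key
  simp only [ne_eq, OfNat.ofNat_ne_zero, not_false_eq_true, zero_pow, mul_zero, add_zero,
    Real.exp_zero, sub_neg_eq_add, zero_add] at key
  rw [eq_div_iff (by positivity)]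
  unfold halfGauss
  linarith

lemma integral_affine_mul_exp_quadratic {b : ℝ} (hb : 0 < b) (A B c s : ℝ) :
    ∫ u in Ioi (0 : ℝ), (s * B + u * A) * Real.exp (-b * u ^ 2 + c * s * u) =
      (s * ((2 * b * B + A * c) * halfGauss b (c * s)) + A) / (2 * b) := by
  have hu := (integrable_mul_exp_quadratic hb (c * s)).integrableOn (s := Ioi 0)
  have h1 := (integrable_exp_quadratic hb (c * s)).integrableOn (s := Ioi 0)
  have : ∀ u : ℝ, (s * B + u * A) * Real.exp (-b * u ^ 2 + c * s * u) =
      s * B * Real.exp (-b * u ^ 2 + c * s * u) +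
        A * (u * Real.exp (-b * u ^ 2 + c * s * u)) := fun u => by ring
  simp_rw [this]
  rw [integral_add (h1.const_mul _) (hu.const_mul _), integral_const_mul, integral_const_mul,
    integral_mul_exp_quadratic hb]
  change s * B * halfGauss b (c * s) + _ = _
  field_simp
  ring

/-- The substitution `w = x u` moves the dependence on `x` from the linear to the quadratic term. -/
lemma mul_halfGauss_scale {x : ℝ} (hx : 0 < x) (b c : ℝ) :
    x * halfGauss b (c * -x) = halfGauss (b / x ^ 2) (-c) := by
  have h := integral_comp_mul_left_Ioi'
    (fun w : ℝ => Real.exp (-(b / x ^ 2) * w ^ 2 + -c * w)) 0 hx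
  rw [mul_zero, smul_eq_mul] at h
  unfold halfGauss
  rw [← h]
  congr 2
  ext u
  congr 1
  field_simp

lemma integrableOn_halfGauss {c q : ℝ} (hc : 0 < c) (hq : 0 ≤ q) :
    IntegrableOn (fun w : ℝ => Real.exp (-q * w ^ 2 + -c * w)) (Ioi 0) := by
  refine (integrableOn_exp_mul_Ioi (neg_lt_zero.2 hc) 0).mono' (by fun_prop)
    (ae_of_all _ fun w => ?_)
  rw [Real.norm_of_nonneg (Real.exp_pos _).le, Real.exp_le_exp]
  nlinarith [mul_nonneg hq (sq_nonneg w)]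

lemma continuousOn_halfGauss {c : ℝ} (hc : 0 < c) :
    ContinuousOn (fun q => halfGauss q (-c)) (Ici 0) := by
  unfold halfGauss
  refine continuousOn_of_dominated (bound := fun w : ℝ => Real.exp (-c * w))
    (fun q _ => by fun_prop) (fun q hq => ae_of_all _ fun w => ?_)
    (integrableOn_exp_mul_Ioi (neg_lt_zero.2 hc) 0) (ae_of_all _ fun w => by fun_prop)
  rw [Real.norm_of_nonneg (Real.exp_pos _).le, Real.exp_le_exp]
  nlinarith [mul_nonneg (mem_Ici.1 hq) (sq_nonneg w)]

lemma halfGauss_strictAntiOn {c : ℝ} (hc : 0 < c) :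
    StrictAntiOn (fun q => halfGauss q (-c)) (Ici 0) := by
  intro p hp q hq hpq
  have ip := integrableOn_halfGauss hc hp
  have iq := integrableOn_halfGauss hc hq
  have hlt : ∀ w ∈ Ioi (0 : ℝ), 0 <
      Real.exp (-p * w ^ 2 + -c * w) - Real.exp (-q * w ^ 2 + -c * w) := by
    intro w hw
    rw [sub_pos, Real.exp_lt_exp]
    have : 0 < w ^ 2 := pow_pos hw 2
    nlinarith
  have h : 0 < ∫ w in Ioi (0 : ℝ),
      (Real.exp (-p * w ^ 2 + -c * w) - Real.exp (-q * w ^ 2 + -c * w)) := by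
    rw [setIntegral_pos_iff_support_of_nonneg_ae
      (ae_restrict_of_forall_mem measurableSet_Ioi fun w hw => (hlt w hw).le) (ip.sub iq),
      inter_eq_self_of_subset_right fun w hw => Function.mem_support.2 (hlt w hw).ne']
    simp
  rw [integral_sub ip iq] at h
  exact sub_pos.1 h

lemma halfGauss_zero {c : ℝ} (hc : 0 < c) : halfGauss 0 (-c) = 1 / c := by
  have h := integral_exp_mul_Ioi (neg_lt_zero.2 hc) 0
  simp only [mul_zero, Real.exp_zero, neg_div_neg_eq] at h
  simpa [halfGauss] using h

lemma halfGauss_le {c q : ℝ} (hc : 0 < c) (hq : 0 < q) :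
    halfGauss q (-c) ≤ √(Real.pi / q) / 2 := by
  rw [← integral_gaussian_Ioi]
  refine setIntegral_mono_on (integrableOn_halfGauss hc hq.le)
    (integrable_exp_neg_mul_sq hq).integrableOn measurableSet_Ioi fun w hw => ?_
  rw [Real.exp_le_exp]
  nlinarith [mul_pos hc (mem_Ioi.1 hw)]

lemma exists_halfGauss_eq {c y : ℝ} (hc : 0 < c) (hy : 0 < y) (hyc : y < 1 / c) :
    ∃ q, 0 < q ∧ halfGauss q (-c) = y := by
  -- With this `Q` the bound `√(π / Q) / 2` equals `y / 2`.
  set Q := Real.pi / y ^ 2 with hQ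
  have hQpos : 0 < Q := by positivity
  have hle : halfGauss Q (-c) ≤ y := by
    have h := halfGauss_le hc hQpos
    have : Real.pi / Q = y ^ 2 := by rw [hQ]; field_simp
    rw [this, Real.sqrt_sq hy.le] at h
    linarith
  obtain ⟨q, hq, hqy⟩ := intermediate_value_Icc' hQpos.le
    ((continuousOn_halfGauss hc).mono Icc_subset_Ici_self)
    ⟨hle, by simpa only [halfGauss_zero hc] using hyc.le⟩
  refine ⟨q, lt_of_le_of_ne hq.1 fun h => ?_, hqy⟩
  rw [← h] at hqy
  simp only [halfGauss_zero hc] at hqy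
  linarith

lemma neg_of_zero {A B b c s : ℝ} (hA : 0 < A) (hB : 0 < B) (hb : 0 < b) (hc : 0 < c)
    (h : s * ((2 * b * B + A * c) * halfGauss b (c * s)) + A = 0) : s < 0 := by
  by_contra! hs
  have := halfGauss_pos hb (c * s)
  have : 0 ≤ s * ((2 * b * B + A * c) * halfGauss b (c * s)) := by positivity
  linarith

lemma zero_iff_halfGauss {A B b c x : ℝ} (hA : 0 < A) (hB : 0 < B) (hb : 0 < b) (hc : 0 < c)
    (hx : 0 < x) :
    -x * ((2 * b * B + A * c) * halfGauss b (c * -x)) + A = 0 ↔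
      halfGauss (b / x ^ 2) (-c) = A / (2 * b * B + A * c) := by
  have hK : 0 < 2 * b * B + A * c := by positivity
  rw [← mul_halfGauss_scale hx, eq_div_iff hK.ne']
  constructor <;> intro h <;> linarith

lemma existsUnique_zero {A B b c : ℝ} (hA : 0 < A) (hB : 0 < B) (hb : 0 < b) (hc : 0 < c) :
    ∃! s : ℝ, s * ((2 * b * B + A * c) * halfGauss b (c * s)) + A = 0 := by
  have hlt : A / (2 * b * B + A * c) < 1 / c := by
    rw [div_lt_div_iff₀ (by positivity) hc]
    have : 0 < b * B := by positivity
    linarith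
  refine existsUnique_of_exists_of_unique ?_ ?_
  · obtain ⟨q, hq, hqy⟩ := exists_halfGauss_eq hc (by positivity) hlt
    refine ⟨-√(b / q), (zero_iff_halfGauss hA hB hb hc (by positivity)).2 ?_⟩
    rw [Real.sq_sqrt (by positivity), div_div_cancel₀ hb.ne', hqy]
  · intro s t hs ht
    have hs0 := neg_of_zero hA hB hb hc hs
    have ht0 := neg_of_zero hA hB hb hc ht
    rw [← neg_neg s, zero_iff_halfGauss hA hB hb hc (neg_pos.2 hs0)] at hs
    rw [← neg_neg t, zero_iff_halfGauss hA hB hb hc (neg_pos.2 ht0)] at ht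
    have hq := (halfGauss_strictAntiOn hc).injOn (mem_Ici.2 (by positivity))
      (mem_Ici.2 (by positivity)) (hs.trans ht.symm)
    rw [div_eq_div_iff (pow_pos (neg_pos.2 hs0) 2).ne' (pow_pos (neg_pos.2 ht0) 2).ne',
      mul_right_inj' hb.ne', neg_sq, neg_sq,
      eq_comm, sq_eq_sq_iff_abs_eq_abs, abs_of_neg hs0,
      abs_of_neg ht0] at hq
    exact neg_injective hq

lemma Ea_eq_zero_iff {σ σa σb : ℝ} (hσ : 0 < σ) (hσa : 0 < σa) (hσb : 0 < σb) :
    ∃ b c : ℝ, 0 < b ∧ 0 < c ∧ ∀ s : ℝ, Ea σ σa σb s (Ici 0) = 0 ↔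
      s * ((2 * b * σb ^ 2 + σa ^ 2 * c) * halfGauss b (c * s)) + σa ^ 2 = 0 := by
  set D := σa ^ 2 * σb ^ 2 + σ ^ 2 * (σa ^ 2 + σb ^ 2) with hD
  have hDpos : 0 < D := by positivity
  -- `V` is the conditional variance of `s_b` given `s_a`, and `k * s_a` its conditional mean.
  set V := D / (σ ^ 2 + σa ^ 2) with hV
  have hVpos : 0 < V := by positivity
  set k := σ ^ 2 / (σ ^ 2 + σa ^ 2) with hk
  have hkpos : 0 < k := by positivity
  refine ⟨1 / (2 * V), k / V, by positivity, by positivity, fun s => ?_⟩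
  have hb : 0 < 1 / (2 * V) := by positivity
  set L := Real.exp (-(k * s) ^ 2 / (2 * V)) / √(2 * Real.pi * V) with hL
  have hLpos : 0 < L := by positivity
  have hphi : ∀ u, phi σ σa σb s u =
      L * Real.exp (-(1 / (2 * V)) * u ^ 2 + k / V * s * u) := by
    intro u
    rw [phi, hL, div_mul_eq_mul_div, ← Real.exp_add]
    have : s * σ ^ 2 / (σ ^ 2 + σa ^ 2) = k * s := by rw [hk]; ring
    rw [← hD, ← hV, this]
    congr 2
    field_simp
    ring
  have hnum : ∀ u, postMean σ σa σb s u * phi σ σa σb s u = (σ ^ 2 / D * L) *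
      ((s * σb ^ 2 + u * σa ^ 2) * Real.exp (-(1 / (2 * V)) * u ^ 2 + k / V * s * u)) := by
    intro u
    rw [hphi, postMean, ← hD]
    ring
  have hden : 0 < ∫ u in Ici (0 : ℝ), phi σ σa σb s u := by
    simp_rw [hphi]
    rw [integral_const_mul, integral_Ici_eq_integral_Ioi]
    exact mul_pos hLpos (halfGauss_pos hb _)
  rw [Ea, div_eq_zero_iff, or_iff_left hden.ne']
  simp_rw [hnum]
  rw [integral_const_mul, integral_Ici_eq_integral_Ioi, integral_affine_mul_exp_quadratic hb,
    mul_eq_zero, or_iff_right (by positivity : σ ^ 2 / D * L ≠ 0), div_eq_zero_iff,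
    or_iff_left (by positivity : 2 * (1 / (2 * V)) ≠ 0)]

lemma existsUnique_Ea_eq_zero {σ σa σb : ℝ} (hσ : 0 < σ) (hσa : 0 < σa) (hσb : 0 < σb) :
    ∃! s : ℝ, Ea σ σa σb s (Ici 0) = 0 := by
  obtain ⟨b, c, hb, hc, h⟩ := Ea_eq_zero_iff hσ hσa hσb
  simp_rw [h]
  exact existsUnique_zero (by positivity) (by positivity) hb hc

lemma neg_of_Ea_eq_zero {σ σa σb s : ℝ} (hσ : 0 < σ) (hσa : 0 < σa) (hσb : 0 < σb)
    (hs : Ea σ σa σb s (Ici 0) = 0) : s < 0 := by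
  obtain ⟨b, c, hb, hc, h⟩ := Ea_eq_zero_iff hσ hσa hσb
  exact neg_of_zero (by positivity) (by positivity) hb hc ((h s).1 hs)

/-- Reflecting both signals and exchanging the players turns `E_b` into `-E_a`. -/
lemma Eb_Iic_eq (σ σa σb s : ℝ) :
    Eb σ σa σb s (Iic 0) = -Ea σ σb σa (-s) (Ici 0) := by
  have hphi : ∀ u, phi σ σb σa s u = phi σ σb σa (-s) (-u) := by
    intro u
    simp only [phi]
    congr 4
    ring
  have hpm : ∀ u, postMean σ σa σb u s = -postMean σ σb σa (-s) (-u) := by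
    intro u
    simp only [postMean]
    rw [mul_comm (σb ^ 2) (σa ^ 2), add_comm (σb ^ 2) (σa ^ 2)]
    ring
  simp only [Eb, Ea]
  simp_rw [hpm, hphi, neg_mul]
  rw [integral_neg,
    integral_comp_neg_Iic 0 fun u => postMean σ σb σa (-s) u * phi σ σb σa (-s) u,
    integral_comp_neg_Iic 0 fun u => phi σ σb σa (-s) u, neg_zero,
    integral_Ici_eq_integral_Ioi, integral_Ici_eq_integral_Ioi, neg_div]

/-- the threshold `σ_a([0, ∞))` (the unique zero of `s ↦ E_a(s, [0, ∞))`)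
is strictly negative and `σ_b((-∞, 0])` is strictly positive; in the symmetric case
`σ_a = σ_b` they are opposite, and `e` vanishes at the pair of thresholds. -/
theorem stmt13 (σ σa σb : ℝ) (hσ : 0 < σ) (hσa : 0 < σa) (hσb : 0 < σb) :
    (∃! ma : ℝ, Ea σ σa σb ma (Ici 0) = 0) ∧
    (∃! mb : ℝ, Eb σ σa σb mb (Iic 0) = 0) ∧
    (∀ ma mb : ℝ, Ea σ σa σb ma (Ici 0) = 0 → Eb σ σa σb mb (Iic 0) = 0 →
      ma < 0 ∧ 0 < mb ∧
      (σa = σb → mb = -ma ∧ postMean σ σa σb ma mb = 0)) := by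
  have hEb : ∀ s, Eb σ σa σb s (Iic 0) = 0 ↔ Ea σ σb σa (-s) (Ici 0) = 0 := fun s => by
    rw [Eb_Iic_eq, neg_eq_zero]
  refine ⟨existsUnique_Ea_eq_zero hσ hσa hσb, ?_, fun ma mb hma hmb => ?_⟩
  · obtain ⟨s, hs, huniq⟩ := existsUnique_Ea_eq_zero hσ hσb hσa
    refine ⟨-s, (hEb _).2 (by rwa [neg_neg]), fun t ht => ?_⟩
    rw [← huniq _ ((hEb t).1 ht), neg_neg]
  · have hmb' := (hEb mb).1 hmb
    refine ⟨neg_of_Ea_eq_zero hσ hσa hσb hma,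
      neg_lt_zero.1 (neg_of_Ea_eq_zero hσ hσb hσa hmb'), fun hab => ?_⟩
    subst hab
    have h : ma = -mb := (existsUnique_Ea_eq_zero hσ hσa hσa).unique hma hmb'
    subst h
    refine ⟨(neg_neg mb).symm, ?_⟩
    simp [postMean]
end
end

section
/- In the symmetric model, for any t ≥ 0, consider any on-path (t+1)-history (under the common belief that both players play myopic strategies) in which a common action is played for the first time at date t. Then myopic strategies prescribe the play of that common action at every date from t+1 onward for both players, and this continuation play is a best response for each player regardless of the players' discount factors. -/
/-!
In the symmetric model the complete-information posterior mean of `x` given both signals has the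
sign of `s_a + s_b` for almost every pair of signals, and everything follows from this.

*The sign of the pooled posterior.*  The joint density of the signals is symmetric under exchange
of the two players and under the reflection `(x, s_a, s_b) ↦ (-x, -s_a, -s_b)`.  Strict
monotonicity of the posterior mean in the own signal, for every set of opponent types, excludes
that `∫ x · density` has the wrong sign on a non-null set: integrating over a product of two
sets and using both symmetries together with Fubini would contradict monotonicity
(`no_crossing`).  This gives `ae_pos` and `ae_neg`.

*Junk values.*  Integrals that diverge are `0` by convention.  A non-integrable posterior could
only occur at the central type `s = 0`, since elsewhere the posterior means are nonzero;
`exists_lower_bound` and `Epost_zero_Ioi_pos` exclude that case as well, whence `integrable_all`.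

*Disagreement.*  As long as the players disagree, the sets of types still possible for the two of
them are mirror images `I` and `-I` up to null sets, so by symmetry the myopic thresholds are
opposite, `c` for one player and `-c` for the other (`exists_threshold`, `exists_mirror`).

*Agreement.*  When a common action `z` is played for the first time, say `z = +1`, the types
satisfy `s_a ≥ c` and `s_b ≥ -c`, hence `s_a + s_b ≥ 0` (`Agreement`).  So `z` is optimal even
if the opponent's type were known: each player plays `z` whatever the belief about the remaining
types is, nothing more is revealed, and `z` is played forever.  A deviation may change what the
opponent plays and reveals, but against each single opponent type it earns at most what constant
play of `z` earns, at every date (`Agreement.contPayoff_le`); this does not involve the discount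
factors.
-/


open MeasureTheory Set Filter

noncomputable section

/-- A public history: the list of action pairs (player `a`'s action, player `b`'s
action) taken at dates `0, …, t-1`; `true` stands for the action `+1` and `false` for
`-1`.  Player `a` is indexed by `true` and player `b` by `false`. -/
abbrev Hist := List (Bool × Bool)

/-- A strategy: an action for each own type and each public history. -/
abbrev Strat := ℝ → Hist → Bool

/-- A belief system: for each player, own type and history, a density over the
opponent's types. -/
abbrev Belief := Bool → ℝ → Hist → ℝ → ℝ

/-- The real value of an action. -/
def aval (z : Bool) : ℝ := if z then 1 else -1

/-- The primitives of the repeated social-learning game: a continuous, full-support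
prior density `f` on the state with mean `0`; conditionally independent full-support
signal densities `g i · x` with conditional mean `x`; discount factors `δ i ∈ (0,1)`;
and a horizon `T` (the last date, possibly `∞`). -/
structure Model where
  f : ℝ → ℝ
  g : Bool → ℝ → ℝ → ℝ
  δ : Bool → ℝ
  T : ℕ∞
  f_pos : ∀ x, 0 < f x
  f_cont : Continuous f
  f_prob : ∫ x, f x = 1
  f_mean : ∫ x, x * f x = 0
  g_meas : ∀ i, Measurable fun p : ℝ × ℝ => g i p.1 p.2
  g_pos : ∀ i s x, 0 < g i s x
  g_prob : ∀ i x, ∫ s, g i s x = 1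
  g_mean : ∀ i x, ∫ s, s * g i s x = x
  δ_mem : ∀ i, δ i ∈ Set.Ioo (0 : ℝ) 1

/-- Joint density of the type pair `(s_i, s_j)` (state integrated out), `j = !i`. -/
def dens (M : Model) (i : Bool) (si sj : ℝ) : ℝ :=
  ∫ x, M.f x * M.g i si x * M.g (!i) sj x

/-- `∫ x · (joint density)`: the numerator of the posterior mean of the state. -/
def densX (M : Model) (i : Bool) (si sj : ℝ) : ℝ :=
  ∫ x, x * (M.f x * M.g i si x * M.g (!i) sj x)

/-- Posterior expectation of the state given both signal values (complete
information). -/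
def post2 (M : Model) (i : Bool) (si sj : ℝ) : ℝ := densX M i si sj / dens M i si sj

/-- Posterior expectation `E_i(s_i, S_j)` of the state given own signal `si` and the
event that the opponent's signal lies in `S`. -/
def Epost (M : Model) (i : Bool) (si : ℝ) (S : Set ℝ) : ℝ :=
  (∫ sj in S, densX M i si sj) / ∫ sj in S, dens M i si sj

/-- Assumption E.1: for any (positive-probability) opponent type set `S`, the posterior
expectation `E_i(·, S)` is continuous and strictly increasing, eventually positive at
`+∞` and eventually negative at `-∞` (the form of "`lim_{s→∞} E_i(s, S) > 0` and
`lim_{s→-∞} E_i(s, S) < 0`" that we use). -/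
def E1Holds (M : Model) : Prop :=
  ∀ (i : Bool) (S : Set ℝ), MeasurableSet S → 0 < volume S →
    Continuous (fun s => Epost M i s S) ∧ StrictMono (fun s => Epost M i s S) ∧
    (∀ᶠ s in atTop, 0 < Epost M i s S) ∧ (∀ᶠ s in atBot, Epost M i s S < 0)

/-- Symmetry of the model: the prior is symmetric about `0`, and both players' signals
are drawn from the same family `g` with `g(s|x) = g(-s|-x)`. -/
def Symm (M : Model) : Prop :=
  (∀ z, M.f (-z) = M.f z) ∧ (∀ i j s x, M.g i s x = M.g j s x) ∧
  (∀ i s x, M.g i (-s) (-x) = M.g i s x)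

/-- The continuation of play from history `h` for `t` further periods under the profile
`σ` when the players' types are `s`. -/
def playFrom (σ : Bool → Strat) (s : Bool → ℝ) (h : Hist) : ℕ → Hist
  | 0 => h
  | t + 1 =>
      let h' := playFrom σ s h t
      h' ++ [(σ true (s true) h', σ false (s false) h')]

/-- The type assignment where player `i` has type `si` and the opponent type `sj`. -/
def typPair (i : Bool) (si sj : ℝ) : Bool → ℝ := fun k => if k = i then si else sj

/-- The action of player `i` in period `t` of the continuation of play from `h`. -/
def actOf (σ : Bool → Strat) (s : Bool → ℝ) (h : Hist) (t : ℕ) (i : Bool) : Bool :=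
  if i then σ true (s true) (playFrom σ s h t) else σ false (s false) (playFrom σ s h t)

/-- The expected discounted continuation payoff of player `i` of type `si` at history
`h`, when play follows the profile `σ` and `i` holds the belief density `β` over the
opponent's type.  Periods beyond the horizon `M.T` contribute nothing. -/
def contPayoff (M : Model) (i : Bool) (si : ℝ) (h : Hist) (σ : Bool → Strat)
    (β : ℝ → ℝ) : ℝ :=
  ∫ sj, β sj * ∑' t : ℕ,
    (if ((h.length + t : ℕ) : ℕ∞) ≤ M.T then
      M.δ i ^ t * aval (actOf σ (typPair i si sj) h t i) * post2 M i si sj else 0)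

/-- Sequential rationality (the optimality part of perfect Bayesian equilibrium): at
every history, no player of any type can gain by a unilateral deviation, given her
beliefs there. -/
def SeqRational (M : Model) (σ : Bool → Strat) (β : Belief) : Prop :=
  ∀ (i : Bool) (si : ℝ) (h : Hist) (σ' : Strat),
    contPayoff M i si h (Function.update σ i σ') (β i si h) ≤
      contPayoff M i si h σ (β i si h)

/-- Type `sj` of player `j` is consistent with the history `h` when `j` follows the
strategy `σj`: every action of `j` recorded in `h` is the one `σj` prescribes. -/
def consistentWith (σj : Strat) (j : Bool) (sj : ℝ) (h : Hist) : Prop :=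
  ∀ t, t < h.length →
    (if j then (h.getD t (true, true)).1 else (h.getD t (true, true)).2) =
      σj sj (h.take t)

/-- The set of types of player `j` consistent with the history `h` under `σj`. -/
def consSet (σj : Strat) (j : Bool) (h : Hist) : Set ℝ :=
  {sj | consistentWith σj j sj h}

/-- Bayes consistency of beliefs on-path: whenever the set of opponent types consistent
with the history has positive prior probability, the belief is the prior density of the
opponent's type (given one's own type) conditioned on that set. -/
def BayesOnPath (M : Model) (σ : Bool → Strat) (β : Belief) : Prop :=
  ∀ (i : Bool) (si : ℝ) (h : Hist),
    0 < (∫ sj in consSet (σ (!i)) (!i) h, dens M i si sj) →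
    ∀ sj, β i si h sj =
      (consSet (σ (!i)) (!i) h).indicator (dens M i si) sj /
        ∫ s' in consSet (σ (!i)) (!i) h, dens M i si s'

/-- A profile is myopic (relative to the belief system `β`) if at every history each
type chooses the action maximizing the current-period expected payoff: `+1` when the
expected state is positive and `-1` when it is negative. -/
def Myopic (M : Model) (σ : Bool → Strat) (β : Belief) : Prop :=
  ∀ (i : Bool) (si : ℝ) (h : Hist),
    (0 < (∫ sj, β i si h sj * post2 M i si sj) → σ i si h = true) ∧
    ((∫ sj, β i si h sj * post2 M i si sj) < 0 → σ i si h = false)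

/-- The observed move `p` after history `h` is unexpected (off-path) for the observer of
player `j`: no positive-probability set of `j`'s types is consistent with it. -/
def OffPath (σj : Strat) (j : Bool) (h : Hist) (p : Bool × Bool) : Prop :=
  volume (consSet σj j (h ++ [p])) = 0

/-- Off-path belief rule B.1 (Belief Inertia): an unexpected move by the opponent is
disregarded and beliefs are not updated at all. -/
def BeliefInertia (M : Model) (σ : Bool → Strat) (β : Belief) : Prop :=
  ∀ (i : Bool) (si : ℝ) (h : Hist) (p : Bool × Bool),
    OffPath (σ (!i)) (!i) h p → β i si (h ++ [p]) = β i si h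

/-- Off-path belief rule B.2 (Belief Reset): after an unexpected move by the opponent,
the player discards recent belief updates, working backwards to the most recent prior
(the belief held at the prefix `h.take k`, for the largest such `k`) at which the
current move can be viewed as on-path, and updates that prior with the current move. -/
def BeliefReset (M : Model) (σ : Bool → Strat) (β : Belief) : Prop :=
  ∀ (i : Bool) (si : ℝ) (h : Hist) (p : Bool × Bool),
    OffPath (σ (!i)) (!i) h p →
    ∃ k ≤ h.length,
      0 < volume (consSet (σ (!i)) (!i) (h.take k ++ [p])) ∧
      (∀ k', k < k' → k' ≤ h.length →
        volume (consSet (σ (!i)) (!i) (h.take k' ++ [p])) = 0) ∧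
      ∀ sj, β i si (h ++ [p]) sj =
        (consSet (σ (!i)) (!i) (h.take k ++ [p])).indicator (dens M i si) sj /
          ∫ s' in consSet (σ (!i)) (!i) (h.take k ++ [p]), dens M i si s'


/-! ### Symmetries of the joint density -/

lemma dens_eq (M : Model) (hsym : Symm M) (i : Bool) : dens M i = dens M true := by
  funext s r
  simp only [dens, hsym.2.1 i true, hsym.2.1 (!i) (!true)]

lemma densX_eq (M : Model) (hsym : Symm M) (i : Bool) : densX M i = densX M true := by
  funext s r
  simp only [densX, hsym.2.1 i true, hsym.2.1 (!i) (!true)]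

lemma Epost_eq (M : Model) (hsym : Symm M) (i : Bool) : Epost M i = Epost M true := by
  funext s S
  simp only [Epost, dens_eq M hsym i, densX_eq M hsym i]

lemma dens_swap (M : Model) (hsym : Symm M) (s r : ℝ) :
    dens M true s r = dens M true r s := by
  simp only [dens, hsym.2.1 (!true) true]
  congr 1; funext x; ring

lemma densX_swap (M : Model) (hsym : Symm M) (s r : ℝ) :
    densX M true s r = densX M true r s := by
  simp only [densX, hsym.2.1 (!true) true]
  congr 1; funext x; ring

lemma dens_neg (M : Model) (hsym : Symm M) (s r : ℝ) :
    dens M true (-s) (-r) = dens M true s r := by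
  unfold dens
  rw [← integral_neg_eq_self]
  simp only [hsym.1, hsym.2.2]

lemma densX_neg (M : Model) (hsym : Symm M) (s r : ℝ) :
    densX M true (-s) (-r) = - densX M true s r := by
  unfold densX
  rw [← integral_neg_eq_self, ← integral_neg]
  simp only [hsym.1, hsym.2.2, neg_mul]

lemma dens_nonneg (M : Model) (s r : ℝ) : 0 ≤ dens M true s r :=
  integral_nonneg fun x =>
    (mul_pos (mul_pos (M.f_pos x) (M.g_pos _ _ _)) (M.g_pos _ _ _)).le

lemma setIntegral_neg_set (φ : ℝ → ℝ) (S : Set ℝ) :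
    ∫ r in -S, φ r = ∫ r in S, φ (-r) := by
  have h := (Measure.measurePreserving_neg (volume : Measure ℝ)).setIntegral_preimage_emb
    (MeasurableEquiv.neg ℝ).measurableEmbedding (fun r => φ (-r)) S
  simpa using h

lemma num_neg (M : Model) (hsym : Symm M) (s : ℝ) (S : Set ℝ) :
    ∫ r in -S, densX M true s r = - ∫ r in S, densX M true (-s) r := by
  rw [setIntegral_neg_set, ← integral_neg]
  congr 1; funext r
  rw [← densX_neg M hsym, neg_neg]

lemma den_neg (M : Model) (hsym : Symm M) (s : ℝ) (S : Set ℝ) :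
    ∫ r in -S, dens M true s r = ∫ r in S, dens M true (-s) r := by
  rw [setIntegral_neg_set]
  congr 1; funext r
  rw [← dens_neg M hsym, neg_neg]

lemma Epost_neg (M : Model) (hsym : Symm M) (s : ℝ) (S : Set ℝ) :
    Epost M true s (-S) = - Epost M true (-s) S := by
  simp only [Epost, num_neg M hsym, den_neg M hsym, neg_div]

/-! ### Measurability and integrability -/

lemma measurable_integrand (M : Model) (i j : Bool) :
    Measurable fun p : (ℝ × ℝ) × ℝ => M.f p.2 * M.g i p.1.1 p.2 * M.g j p.1.2 p.2 := by
  have h1 := M.f_cont.measurable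
  have h2 : Measurable fun p : (ℝ × ℝ) × ℝ => M.g i p.1.1 p.2 :=
    (M.g_meas i).comp (f := fun p : (ℝ × ℝ) × ℝ => (p.1.1, p.2)) (by fun_prop)
  have h3 : Measurable fun p : (ℝ × ℝ) × ℝ => M.g j p.1.2 p.2 :=
    (M.g_meas j).comp (f := fun p : (ℝ × ℝ) × ℝ => (p.1.2, p.2)) (by fun_prop)
  exact ((h1.comp measurable_snd).mul h2).mul h3

lemma measurable_dens (M : Model) :
    Measurable fun p : ℝ × ℝ => dens M true p.1 p.2 :=
  ((measurable_integrand M true (!true)).stronglyMeasurable.integral_prod_right').measurable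

lemma measurable_densX (M : Model) :
    Measurable fun p : ℝ × ℝ => densX M true p.1 p.2 :=
  ((measurable_snd.mul
    (measurable_integrand M true (!true))).stronglyMeasurable.integral_prod_right').measurable

lemma measurable_dens_right (M : Model) (s : ℝ) : Measurable (dens M true s) :=
  (measurable_dens M).comp (measurable_const.prodMk measurable_id)

lemma measurable_densX_right (M : Model) (s : ℝ) : Measurable (densX M true s) :=
  (measurable_densX M).comp (measurable_const.prodMk measurable_id)

/-- The joint density of the two signals is integrable over the plane: the triple density
`f(x) g(s|x) g(r|x)` is, since each factor is a probability density. -/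
lemma integrable_dens_prod (M : Model) :
    Integrable (fun p : ℝ × ℝ => dens M true p.1 p.2) (volume.prod volume) := by
  have hg : ∀ i x, Integrable (fun s => M.g i s x) := fun i x =>
    Integrable.of_integral_ne_zero (by rw [M.g_prob]; norm_num)
  have hf : Integrable M.f := Integrable.of_integral_ne_zero (by rw [M.f_prob]; norm_num)
  have hm : Measurable fun p : ℝ × (ℝ × ℝ) =>
      M.f p.1 * M.g true p.2.1 p.1 * M.g (!true) p.2.2 p.1 :=
    (measurable_integrand M true (!true)).comp measurable_swap
  have h : Integrable (fun p : ℝ × (ℝ × ℝ) =>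
      M.f p.1 * M.g true p.2.1 p.1 * M.g (!true) p.2.2 p.1)
      (volume.prod (volume.prod volume)) := by
    rw [integrable_prod_iff hm.aestronglyMeasurable]
    constructor
    · refine Eventually.of_forall fun x => ?_
      have := ((hg true x).mul_prod (hg (!true) x)).const_mul (M.f x)
      simpa [mul_assoc] using this
    · have : (fun x => ∫ y : ℝ × ℝ, ‖M.f x * M.g true y.1 x * M.g (!true) y.2 x‖
          ∂(volume.prod volume)) = M.f := by
        funext x
        have e : ∀ y : ℝ × ℝ, ‖M.f x * M.g true y.1 x * M.g (!true) y.2 x‖ =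
            M.f x * (M.g true y.1 x * M.g (!true) y.2 x) := fun y => by
          rw [Real.norm_of_nonneg
            (mul_pos (mul_pos (M.f_pos x) (M.g_pos _ _ _)) (M.g_pos _ _ _)).le, mul_assoc]
        simp only [e]
        rw [integral_const_mul, integral_prod_mul (fun s => M.g true s x)
          (fun s => M.g (!true) s x), M.g_prob, M.g_prob]
        ring
      exact hf.congr (Eventually.of_forall fun x => (congrFun this x).symm)
  exact h.integral_prod_right

lemma Epost_zero_univ (M : Model) (hsym : Symm M) : Epost M true 0 univ = 0 := by
  have h := Epost_neg M hsym 0 univ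
  rw [neg_univ, neg_zero] at h
  linarith

lemma Epost_strictMono (M : Model) (hE1 : E1Holds M) {S : Set ℝ} (hS : MeasurableSet S)
    (hpos : 0 < volume S) : StrictMono fun s => Epost M true s S :=
  (hE1 true S hS hpos).2.1

lemma Epost_univ_ne (M : Model) (hE1 : E1Holds M) (hsym : Symm M) {s : ℝ} (hs : s ≠ 0) :
    Epost M true s univ ≠ 0 := by
  rw [← Epost_zero_univ M hsym]
  exact fun h => hs ((Epost_strictMono M hE1 MeasurableSet.univ (by simp)).injective h)

/-- A junk-value argument: were the numerator or the denominator of the posterior mean not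
integrable, the posterior mean would be `0`, and by strict monotonicity that happens only
at `s = 0`. -/
lemma integrable_of_ne (M : Model) (hE1 : E1Holds M) (hsym : Symm M) {s : ℝ} (hs : s ≠ 0) :
    Integrable (densX M true s) ∧ Integrable (dens M true s) := by
  have h := Epost_univ_ne M hE1 hsym hs
  simp only [Epost, setIntegral_univ] at h
  exact ⟨Integrable.of_integral_ne_zero (fun h0 => h (by rw [h0, zero_div])),
    Integrable.of_integral_ne_zero (fun h0 => h (by rw [h0, div_zero]))⟩

/-- A symmetric integrable kernel cannot have negative integral over `A` from every point of
`C` and nonnegative integral over `C` from every point of `A`. -/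
lemma no_crossing {ψ : ℝ → ℝ → ℝ} (hsymm : ∀ s r, ψ s r = ψ r s) {A C : Set ℝ}
    (hA : MeasurableSet A) (hC : MeasurableSet C) (hCpos : 0 < volume C)
    (hint : Integrable (fun p : ℝ × ℝ => ψ p.1 p.2)
      ((volume.restrict C).prod (volume.restrict A)))
    (h1 : ∀ s ∈ C, ∫ r in A, ψ s r < 0) (h2 : ∀ r ∈ A, 0 ≤ ∫ s in C, ψ r s) : False := by
  have hsw : ∫ s in C, ∫ r in A, ψ s r = ∫ r in A, ∫ s in C, ψ s r :=
    integral_integral_swap hint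
  have hge : 0 ≤ ∫ r in A, ∫ s in C, ψ s r := by
    refine setIntegral_nonneg hA fun r hr => ?_
    simp only [hsymm _ r]
    exact h2 r hr
  have hlt : 0 < ∫ s in C, -∫ r in A, ψ s r := by
    rw [setIntegral_pos_iff_support_of_nonneg_ae]
    · refine hCpos.trans_le (measure_mono fun s hs => ⟨?_, hs⟩)
      simpa using (h1 s hs).ne
    · filter_upwards [ae_restrict_mem hC] with s hs
      simpa using (h1 s hs).le
    · exact hint.integral_prod_left.neg
  rw [integral_neg] at hlt
  linarith

/-- Every set of types of positive measure has a part of positive measure over which the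
numerator of the posterior mean is integrable on the plane, also after reflection. No
moment condition on the prior is available, so this localisation replaces it. -/
lemma exists_integrable_part (M : Model) (hE1 : E1Holds M) (hsym : Symm M) {P₀ : Set ℝ}
    (hP₀ : MeasurableSet P₀) (hpos : 0 < volume P₀) :
    ∃ P ⊆ P₀, MeasurableSet P ∧ 0 < volume P ∧
      Integrable (fun p : ℝ × ℝ => densX M true p.1 p.2) ((volume.restrict P).prod volume) ∧
      Integrable (fun p : ℝ × ℝ => densX M true p.1 p.2)
        ((volume.restrict (-P)).prod volume) := by
  set m : ℝ → ENNReal := fun s => ∫⁻ r, ‖densX M true s r‖ₑ with hm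
  have hmm : Measurable m := (measurable_densX M).enorm.lintegral_prod_right'
  set Q : ℕ → Set ℝ := fun n => P₀ ∩ {s | m s ≤ n ∧ m (-s) ≤ n ∧ |s| ≤ n} with hQ
  have hQm : ∀ n, MeasurableSet (Q n) := fun n =>
    hP₀.inter ((measurableSet_le hmm measurable_const).inter
      ((measurableSet_le (hmm.comp measurable_neg) measurable_const).inter
        (measurableSet_le measurable_abs measurable_const)))
  have hfin : ∀ s : ℝ, s ≠ 0 → m s < ⊤ := fun s hs =>
    (integrable_of_ne M hE1 hsym hs).1.hasFiniteIntegral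
  have hcov : P₀ ⊆ {0} ∪ ⋃ n, Q n := by
    intro s hs
    by_cases h0 : s = 0
    · exact Or.inl h0
    right
    obtain ⟨n1, h1⟩ := ENNReal.exists_nat_gt (hfin s h0).ne
    obtain ⟨n2, h2⟩ := ENNReal.exists_nat_gt (hfin (-s) (neg_ne_zero.2 h0)).ne
    obtain ⟨n3, h3⟩ := exists_nat_gt |s|
    refine mem_iUnion.2 ⟨n1 + n2 + n3, hs, ?_, ?_, ?_⟩
    · refine h1.le.trans ?_; exact_mod_cast (by omega : n1 ≤ n1 + n2 + n3)
    · refine h2.le.trans ?_; exact_mod_cast (by omega : n2 ≤ n1 + n2 + n3)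
    · refine h3.le.trans ?_; exact_mod_cast (by omega : n3 ≤ n1 + n2 + n3)
  obtain ⟨n, hn⟩ : ∃ n, 0 < volume (Q n) := by
    by_contra! hcon
    have : volume P₀ ≤ 0 := by
      refine (measure_mono hcov).trans ((measure_union_le _ _).trans ?_)
      rw [measure_iUnion_null fun n => le_antisymm (hcon n) zero_le]
      simp
    exact absurd hpos (not_lt.2 this)
  have key : ∀ P : Set ℝ, MeasurableSet P → P ⊆ Icc (-n : ℝ) n → (∀ s ∈ P, m s ≤ n) →
      Integrable (fun p : ℝ × ℝ => densX M true p.1 p.2) ((volume.restrict P).prod volume) := by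
    intro P hP hb hmP
    refine ⟨(measurable_densX M).aestronglyMeasurable, ?_⟩
    rw [HasFiniteIntegral, lintegral_prod _ (measurable_densX M).enorm.aemeasurable]
    calc ∫⁻ s in P, m s ≤ ∫⁻ s in P, (n : ENNReal) := setLIntegral_mono' hP hmP
      _ = n * volume P := by simp
      _ ≤ n * volume (Icc (-n : ℝ) n) := by gcongr
      _ < ⊤ := ENNReal.mul_lt_top (by simp) (by simp)
  refine ⟨Q n, inter_subset_left, hQm n, hn, key _ (hQm n) ?_ fun s hs => hs.2.1,
    key _ (hQm n).neg ?_ fun s hs => ?_⟩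
  · exact fun s hs => abs_le.1 hs.2.2.2
  · exact fun s hs => abs_le.1 (by simpa using hs.2.2.2)
  · simpa using hs.2.2.1

/-! ### The sign of the posterior mean given both signals -/

lemma num_neg_of_Epost_neg (M : Model) {s : ℝ} {S : Set ℝ} (h : Epost M true s S < 0) :
    ∫ r in S, densX M true s r < 0 := by
  by_contra! hn
  exact absurd h (not_lt.2 (div_nonneg hn (integral_nonneg fun r => dens_nonneg M s r)))

/-- If type `c` did not lean to `+1` against any part of a set `P` of opponent types above
`-c`, then every type in `-P`, lying below `c`, would strictly lean to `-1` against `P`, and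
by reflection every type in `P` would strictly lean to `+1` against `-P`. -/
lemma exists_part_Epost_pos (M : Model) (hE1 : E1Holds M) (hsym : Symm M) {c : ℝ} {P₀ : Set ℝ}
    (hP₀ : MeasurableSet P₀) (hpos : 0 < volume P₀) (hsub : ∀ r ∈ P₀, 0 < c + r) :
    ∃ P ⊆ P₀, MeasurableSet P ∧ 0 < Epost M true c P := by
  obtain ⟨P, hPP, hP, hPpos, -, hint⟩ := exists_integrable_part M hE1 hsym hP₀ hpos
  refine ⟨P, hPP, hP, ?_⟩
  by_contra! hle
  have hneg : ∀ s ∈ -P, ∫ r in P, densX M true s r < 0 := by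
    intro s hs
    refine num_neg_of_Epost_neg M (lt_of_lt_of_le ?_ hle)
    have := hsub _ (hPP (mem_neg.1 hs))
    exact Epost_strictMono M hE1 hP hPpos (by linarith)
  refine no_crossing (densX_swap M hsym) hP hP.neg (by simpa using hPpos)
    (hint.mono_measure (Measure.prod_mono le_rfl Measure.restrict_le_self)) hneg ?_
  intro r hr
  rw [num_neg M hsym]
  have := hneg (-r) (by simpa using hr)
  linarith

/-- For every type `c` and almost every opponent type `r > -c`, the posterior mean given
both types is positive. -/
lemma ae_pos (M : Model) (hE1 : E1Holds M) (hsym : Symm M) (c : ℝ) :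
    ∀ᵐ r, 0 < c + r → dens M true c r ≠ 0 ∧ 0 < densX M true c r := by
  have hm0 : MeasurableSet {r : ℝ | 0 < c + r} :=
    measurableSet_lt measurable_const (measurable_const.add measurable_id)
  have h1 : ∀ᵐ r, ¬ (0 < c + r ∧ dens M true c r = 0) := by
    by_contra hcon
    have hm : MeasurableSet {r : ℝ | 0 < c + r ∧ dens M true c r = 0} :=
      hm0.inter (measurableSet_eq_fun (measurable_dens_right M c) measurable_const)
    have hpos : 0 < volume {r : ℝ | 0 < c + r ∧ dens M true c r = 0} := by
      rw [pos_iff_ne_zero]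
      simpa [ae_iff] using hcon
    obtain ⟨P, hPs, hP, hE⟩ := exists_part_Epost_pos M hE1 hsym hm hpos fun r hr => hr.1
    have : ∫ r in P, dens M true c r = 0 := by
      rw [setIntegral_congr_fun hP (g := fun _ => (0 : ℝ)) fun r hr => (hPs hr).2]
      simp
    simp [Epost, this] at hE
  have h2 : ∀ᵐ r, ¬ (0 < c + r ∧ densX M true c r ≤ 0) := by
    by_contra hcon
    have hm : MeasurableSet {r : ℝ | 0 < c + r ∧ densX M true c r ≤ 0} :=
      hm0.inter (measurableSet_le (measurable_densX_right M c) measurable_const)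
    have hpos : 0 < volume {r : ℝ | 0 < c + r ∧ densX M true c r ≤ 0} := by
      rw [pos_iff_ne_zero]
      simpa [ae_iff] using hcon
    obtain ⟨P, hPs, hP, hE⟩ := exists_part_Epost_pos M hE1 hsym hm hpos fun r hr => hr.1
    have h3 : ∫ r in P, densX M true c r ≤ 0 := setIntegral_nonpos hP fun r hr => (hPs hr).2
    exact absurd hE (not_lt.2 (div_nonpos_of_nonpos_of_nonneg h3
      (integral_nonneg fun r => dens_nonneg M c r)))
  filter_upwards [h1, h2] with r h1 h2 hr
  exact ⟨fun h => h1 ⟨hr, h⟩, not_le.1 fun h => h2 ⟨hr, h⟩⟩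

lemma ae_neg (M : Model) (hE1 : E1Holds M) (hsym : Symm M) (c : ℝ) :
    ∀ᵐ r, c + r < 0 → dens M true c r ≠ 0 ∧ densX M true c r < 0 := by
  have h := (Measure.measurePreserving_neg (volume : Measure ℝ)).quasiMeasurePreserving.ae
    (ae_pos M hE1 hsym (-c))
  filter_upwards [h] with r hr hlt
  have := hr (by linarith)
  rw [dens_neg M hsym, densX_neg M hsym] at this
  exact ⟨this.1, by linarith [this.2]⟩

lemma ae_dens_pos (M : Model) (hE1 : E1Holds M) (hsym : Symm M) (c : ℝ) :
    ∀ᵐ r, 0 < dens M true c r := by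
  have h0 : ∀ᵐ r : ℝ, r ≠ -c := by simp [ae_iff]
  filter_upwards [ae_pos M hE1 hsym c, ae_neg M hE1 hsym c, h0] with r h1 h2 h0
  refine lt_of_le_of_ne (dens_nonneg M c r) (Ne.symm ?_)
  rcases lt_trichotomy (c + r) 0 with h | h | h
  · exact (h2 h).1
  · exact absurd (by linarith) h0
  · exact (h1 h).1

/-! ### Integrability for the central type -/

lemma setIntegral_pos_of_ae {φ : ℝ → ℝ} {S : Set ℝ} (hS : NullMeasurableSet S)
    (hpos : 0 < volume S) (hint : IntegrableOn φ S) (h : ∀ᵐ r, r ∈ S → 0 < φ r) :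
    0 < ∫ r in S, φ r := by
  have h' : ∀ᵐ r ∂(volume.restrict S), 0 < φ r := (ae_restrict_iff'₀ hS).2 h
  rw [integral_pos_iff_support_of_nonneg_ae (h'.mono fun r hr => hr.le) hint]
  rw [pos_iff_ne_zero]
  intro h0
  have h1 : ∀ᵐ r ∂(volume.restrict S), ¬ r ∈ Function.support φ := by
    rw [ae_iff]; simpa [Function.support] using h0
  have h2 : ∀ᵐ r ∂(volume.restrict S), False := by
    filter_upwards [h', h1] with r ha hb using hb ha.ne'
  rw [ae_iff] at h2
  simp at h2
  exact hpos.ne' h2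

lemma den_pos_of_ne (M : Model) (hE1 : E1Holds M) (hsym : Symm M) {s : ℝ} (hs : s ≠ 0)
    {S : Set ℝ} (hS : MeasurableSet S) (hpos : 0 < volume S) : 0 < ∫ r in S, dens M true s r :=
  setIntegral_pos_of_ae hS.nullMeasurableSet hpos (integrable_of_ne M hE1 hsym hs).2.integrableOn
    ((ae_dens_pos M hE1 hsym s).mono fun _ h _ => h)

/-- Near the central type, posterior means against opponents just above `0` are bounded
below: types in a set `C` below `-1` do at least as well against positive opponents as the
constant `q = E(0, C)`, because positive opponents do at least as well against `C`. -/
lemma exists_lower_bound (M : Model) (hE1 : E1Holds M) (hsym : Symm M) :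
    ∃ q : ℝ, ∀ s : ℝ, -1 < s → s < 0 → ∀ ε > 0,
      q * ∫ r in Ioc 0 ε, dens M true s r ≤ ∫ r in Ioc 0 ε, densX M true s r := by
  obtain ⟨C, hCs, hC, hCpos, hint, -⟩ := exists_integrable_part M hE1 hsym
    (P₀ := Ioo (-2 : ℝ) (-1)) measurableSet_Ioo (by simp)
  refine ⟨Epost M true 0 C, fun s hs hs0 ε hε => ?_⟩
  set q := Epost M true 0 C with hq
  by_contra! hlt
  have hεpos : 0 < volume (Ioc 0 ε) := by simpa using hε
  have hden : ∀ s : ℝ, s ≠ 0 → 0 < ∫ r in Ioc 0 ε, dens M true s r := fun s hs =>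
    den_pos_of_ne M hE1 hsym hs measurableSet_Ioc hεpos
  have hsq : Epost M true s (Ioc 0 ε) < q := (div_lt_iff₀ (hden s hs0.ne)).2 hlt
  have hD : Integrable (fun p : ℝ × ℝ => dens M true p.1 p.2)
      ((volume.restrict C).prod (volume.restrict (Ioc 0 ε))) :=
    (integrable_dens_prod M).mono_measure
      (Measure.prod_mono Measure.restrict_le_self Measure.restrict_le_self)
  have hX : Integrable (fun p : ℝ × ℝ => densX M true p.1 p.2)
      ((volume.restrict C).prod (volume.restrict (Ioc 0 ε))) :=
    hint.mono_measure (Measure.prod_mono le_rfl Measure.restrict_le_self)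
  have hsplit : ∀ (s : ℝ) (S : Set ℝ), s ≠ 0 →
      ∫ r in S, (densX M true s r - q * dens M true s r) =
        (∫ r in S, densX M true s r) - q * ∫ r in S, dens M true s r := by
    intro s S hs
    obtain ⟨h1, h2⟩ := integrable_of_ne M hE1 hsym hs
    rw [integral_sub h1.integrableOn (h2.integrableOn.const_mul q), integral_const_mul]
  refine no_crossing (ψ := fun s r => densX M true s r - q * dens M true s r)
    (fun s r => by simp only [densX_swap M hsym s r, dens_swap M hsym s r])
    measurableSet_Ioc hC hCpos (hX.sub (hD.const_mul q)) ?_ ?_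
  · intro s' hs'
    have hb := hCs hs'
    have hs'0 : s' ≠ 0 := by have := hb.2; linarith
    rw [hsplit _ _ hs'0]
    have hlt' : Epost M true s' (Ioc 0 ε) < q :=
      (Epost_strictMono M hE1 measurableSet_Ioc hεpos (by linarith [hb.2])).trans hsq
    have := (div_lt_iff₀ (hden s' hs'0)).1 hlt'
    linarith
  · intro r hr
    have hr0 : (r : ℝ) ≠ 0 := hr.1.ne'
    rw [hsplit _ _ hr0]
    have hlt' : q < Epost M true r C := Epost_strictMono M hE1 hC hCpos hr.1
    have := (lt_div_iff₀ (den_pos_of_ne M hE1 hsym hr0 hC hCpos)).1 hlt'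
    linarith

/-- The central type leans to `+1` once it knows that the opponent's type is positive. The
content is that the posterior mean is not a junk value; otherwise all negative types would
strictly lean to `-1` against positive opponents, already against `(0, 1)`, and on
`(-1, 0) × (0, 1)` the numerator is integrable by `exists_lower_bound`. -/
lemma Epost_zero_Ioi_pos (M : Model) (hE1 : E1Holds M) (hsym : Symm M) :
    0 < Epost M true 0 (Ioi 0) := by
  by_contra! hle
  obtain ⟨q, hq⟩ := exists_lower_bound M hE1 hsym
  have hrow : ∀ s : ℝ, s ∈ Ioo (-1 : ℝ) 0 → ∫ r in Ioo 0 1, densX M true s r < 0 := by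
    intro s hs
    have hI := (integrable_of_ne M hE1 hsym hs.2.ne).1
    have h1 : ∫ r in Ioi 0, densX M true s r < 0 :=
      num_neg_of_Epost_neg M (lt_of_lt_of_le
        (Epost_strictMono M hE1 measurableSet_Ioi (by simp) hs.2) hle)
    rw [← Ioo_union_Ici_eq_Ioi (zero_lt_one' ℝ), setIntegral_union
      (by rw [Set.disjoint_left]; exact fun x h1 h2 => absurd h1.2 (not_lt.2 h2))
      measurableSet_Ici hI.integrableOn hI.integrableOn] at h1
    have h2 : 0 ≤ ∫ r in Ici 1, densX M true s r := by
      refine setIntegral_nonneg_of_ae_restrict ?_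
      filter_upwards [ae_restrict_of_ae (ae_pos M hE1 hsym s), ae_restrict_mem measurableSet_Ici]
        with r h3 h4
      exact (h3 (by have := hs.1; have : 1 ≤ r := h4; linarith)).2.le
    linarith
  have habs : ∀ s : ℝ, s ∈ Ioo (-1 : ℝ) 0 →
      ∫ r in Ioo 0 1, ‖densX M true s r‖ ≤ 2 * |q| * ∫ r, dens M true s r := by
    intro s hs
    obtain ⟨hI, hD⟩ := integrable_of_ne M hE1 hsym hs.2.ne
    have hun : Ioo (0 : ℝ) 1 = Ioc 0 (-s) ∪ Ioo (-s) 1 :=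
      (Ioc_union_Ioo_eq_Ioo (by linarith [hs.2]) (by linarith [hs.1])).symm
    have hdisj : Disjoint (Ioc (0 : ℝ) (-s)) (Ioo (-s) 1) := by
      rw [Set.disjoint_left]; exact fun x h1 h2 => absurd h2.1 (not_lt.2 h1.2)
    have h1 := hrow s hs
    rw [hun, setIntegral_union hdisj measurableSet_Ioo hI.integrableOn hI.integrableOn] at h1
    rw [hun, setIntegral_union hdisj measurableSet_Ioo hI.norm.integrableOn hI.norm.integrableOn]
    have h0 : ∀ᵐ r : ℝ, r ≠ -s := by simp [ae_iff]
    have h2 : ∫ r in Ioc 0 (-s), ‖densX M true s r‖ = - ∫ r in Ioc 0 (-s), densX M true s r := by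
      rw [← integral_neg]
      refine setIntegral_congr_ae measurableSet_Ioc ?_
      filter_upwards [ae_neg M hE1 hsym s, h0] with r h3 h4 h5
      have : r < -s := lt_of_le_of_ne h5.2 h4
      exact Real.norm_of_nonpos (h3 (by linarith)).2.le
    have h3 : ∫ r in Ioo (-s) 1, ‖densX M true s r‖ = ∫ r in Ioo (-s) 1, densX M true s r := by
      refine setIntegral_congr_ae measurableSet_Ioo ?_
      filter_upwards [ae_pos M hE1 hsym s] with r h3 h5
      exact Real.norm_of_nonneg (h3 (by linarith [h5.1])).2.le
    have h4 := hq s hs.1 hs.2 (-s) (by linarith [hs.2])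
    have h5 : ∫ r in Ioc 0 (-s), dens M true s r ≤ ∫ r, dens M true s r :=
      setIntegral_le_integral hD (Eventually.of_forall (dens_nonneg M s))
    have h6 : 0 ≤ ∫ r in Ioc 0 (-s), dens M true s r :=
      integral_nonneg fun r => dens_nonneg M s r
    rw [h2, h3]
    have h7 : -(q * ∫ r in Ioc 0 (-s), dens M true s r) ≤
        |q| * ∫ r in Ioc 0 (-s), dens M true s r := by
      rw [← neg_mul]; exact mul_le_mul_of_nonneg_right (neg_le_abs q) h6
    have h8 := mul_le_mul_of_nonneg_left h5 (abs_nonneg q)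
    linarith
  have hint : Integrable (fun p : ℝ × ℝ => densX M true p.1 p.2)
      ((volume.restrict (Ioo (-1 : ℝ) 0)).prod (volume.restrict (Ioo (0 : ℝ) 1))) := by
    rw [integrable_prod_iff (measurable_densX M).aestronglyMeasurable]
    constructor
    · filter_upwards [ae_restrict_mem measurableSet_Ioo] with s hs
      exact (integrable_of_ne M hE1 hsym hs.2.ne).1.integrableOn
    · refine Integrable.mono' (g := fun s => 2 * |q| * ∫ r, dens M true s r)
        ((integrable_dens_prod M).integral_prod_left.integrableOn.const_mul _) ?_ ?_
      · exact (measurable_densX M).norm.stronglyMeasurable.integral_prod_right'.aestronglyMeasurable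
      · filter_upwards [ae_restrict_mem measurableSet_Ioo] with s hs
        rw [Real.norm_of_nonneg (integral_nonneg fun r => norm_nonneg _)]
        exact habs s hs
  refine no_crossing (densX_swap M hsym) measurableSet_Ioo measurableSet_Ioo (by simp)
    hint hrow ?_
  intro r hr
  have he : Ioo (-1 : ℝ) 0 = -Ioo 0 1 := by simp
  rw [he, num_neg M hsym]
  have := hrow (-r) ⟨by linarith [hr.2], by linarith [hr.1]⟩
  linarith

/-- For every type, the numerator and denominator of the posterior mean are integrable. -/
lemma integrable_all (M : Model) (hE1 : E1Holds M) (hsym : Symm M) (s : ℝ) :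
    Integrable (densX M true s) ∧ Integrable (dens M true s) := by
  rcases eq_or_ne s 0 with rfl | hs
  swap
  · exact integrable_of_ne M hE1 hsym hs
  have h := Epost_zero_Ioi_pos M hE1 hsym
  have h' := Epost_neg M hsym 0 (Ioi 0)
  rw [neg_zero] at h'
  have hX : ∀ S, Epost M true 0 S ≠ 0 →
      IntegrableOn (densX M true 0) S ∧ IntegrableOn (dens M true 0) S := fun S hS =>
    ⟨Integrable.of_integral_ne_zero (fun h0 => hS (by rw [Epost, h0, zero_div])),
      Integrable.of_integral_ne_zero (fun h0 => hS (by rw [Epost, h0, div_zero]))⟩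
  have h1 := hX _ h.ne'
  have h2 := hX (-Ioi 0) (by rw [h']; exact neg_ne_zero.2 h.ne')
  have he : -Ioi (0 : ℝ) = Iio 0 := by simp
  rw [he] at h2
  have hu : (Iio (0 : ℝ) ∪ Ioi 0 : Set ℝ) =ᵐ[volume] (univ : Set ℝ) := by
    rw [Iio_union_Ioi]
    exact ae_eq_univ.2 (by simp)
  constructor
  · have := (h2.1.union h1.1).congr_set_ae hu.symm
    exact integrableOn_univ.1 this
  · have := (h2.2.union h1.2).congr_set_ae hu.symm
    exact integrableOn_univ.1 this

lemma den_pos (M : Model) (hE1 : E1Holds M) (hsym : Symm M) (s : ℝ) {S : Set ℝ}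
    (hS : NullMeasurableSet S) (hpos : 0 < volume S) : 0 < ∫ r in S, dens M true s r :=
  setIntegral_pos_of_ae hS hpos (integrable_all M hE1 hsym s).2.integrableOn
    ((ae_dens_pos M hE1 hsym s).mono fun _ h _ => h)

/-! ### Myopic play against an on-path set of opponent types -/

lemma aval_not (b : Bool) : aval (!b) = -aval b := by cases b <;> simp [aval]

lemma belief_eq (M : Model) (hE1 : E1Holds M) (hsym : Symm M) {σ : Bool → Strat} {β : Belief}
    (hB : BayesOnPath M σ β) (i : Bool) (s : ℝ) {l : Hist}
    (hT : NullMeasurableSet (consSet (σ (!i)) (!i) l))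
    (hpos : 0 < volume (consSet (σ (!i)) (!i) l)) (r : ℝ) :
    β i s l r = (consSet (σ (!i)) (!i) l).indicator (dens M true s) r /
      ∫ r in consSet (σ (!i)) (!i) l, dens M true s r := by
  have h := hB i s l
  rw [dens_eq M hsym i] at h
  exact h (den_pos M hE1 hsym s hT hpos) r

lemma post2_eq (M : Model) (hsym : Symm M) (i : Bool) (s r : ℝ) :
    post2 M i s r = densX M true s r / dens M true s r := by
  rw [post2, dens_eq M hsym i, densX_eq M hsym i]

/-- On path, a myopic type plays the sign of the numerator of its posterior mean. -/
lemma myopic_act (M : Model) (hE1 : E1Holds M) (hsym : Symm M) {σ : Bool → Strat} {β : Belief}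
    (hB : BayesOnPath M σ β) (hmyo : Myopic M σ β) (i : Bool) (s : ℝ) {l : Hist}
    (hT : NullMeasurableSet (consSet (σ (!i)) (!i) l))
    (hpos : 0 < volume (consSet (σ (!i)) (!i) l)) (z : Bool)
    (hz : 0 < aval z * ∫ r in consSet (σ (!i)) (!i) l, densX M true s r) : σ i s l = z := by
  set T := consSet (σ (!i)) (!i) l with hTdef
  have hZ := den_pos M hE1 hsym s hT hpos
  have hE : ∫ r, β i s l r * post2 M i s r =
      (∫ r in T, densX M true s r) / ∫ r in T, dens M true s r := by
    rw [← integral_indicator₀ hT, ← integral_div]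
    refine integral_congr_ae ?_
    filter_upwards [ae_dens_pos M hE1 hsym s] with r hr
    rw [belief_eq M hE1 hsym hB i s hT hpos, post2_eq M hsym]
    by_cases hrT : r ∈ T
    · simp only [← hTdef, indicator_of_mem hrT]
      field_simp
    · simp [← hTdef, indicator_of_notMem hrT]
  have hm := hmyo i s l
  rw [hE] at hm
  cases z
  · exact hm.2 (div_neg_of_neg_of_pos (by simpa [aval] using hz) hZ)
  · exact hm.1 (div_pos (by simpa [aval] using hz) hZ)

/-! ### Mirror-image type sets along a disagreement path -/

lemma consSet_nil (σj : Strat) (j : Bool) : consSet σj j [] = univ := by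
  ext s; simp [consSet, consistentWith]

lemma consSet_snoc (σj : Strat) (j : Bool) (l : Hist) (p : Bool × Bool) :
    consSet σj j (l ++ [p]) =
      consSet σj j l ∩ {s | (if j then p.1 else p.2) = σj s l} := by
  ext s
  simp only [consSet, consistentWith, mem_ofPred_eq, mem_inter_iff, List.length_append,
    List.length_singleton]
  constructor
  · intro H
    refine ⟨fun t ht => ?_, ?_⟩
    · have := H t (by omega)
      rwa [List.getD_append _ _ _ _ ht, List.take_append_of_le_length ht.le] at this
    · have := H l.length (by omega)
      simpa [List.getD_append_right] using this
  · rintro ⟨H1, H2⟩ t ht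
    rcases Nat.lt_succ_iff_lt_or_eq.1 ht with h | rfl
    · rw [List.getD_append _ _ _ _ h, List.take_append_of_le_length h.le]
      exact H1 t h
    · simpa [List.getD_append_right] using H2

/-- `φ` plays `true` above the threshold `c` and `false` below it; at `c` itself it is
unrestricted. -/
def IsThreshold (φ : ℝ → Bool) (c : ℝ) : Prop :=
  (∀ s, c < s → φ s = true) ∧ ∀ s, s < c → φ s = false

/-- The open half-line above `c` for the action `true`, below `c` for `false`. -/
def halfLine (b : Bool) (c : ℝ) : Set ℝ := {s | 0 < aval b * (s - c)}

lemma measurableSet_halfLine (b : Bool) (c : ℝ) : MeasurableSet (halfLine b c) :=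
  measurableSet_lt measurable_const (by fun_prop)

lemma IsThreshold.nonneg {φ : ℝ → Bool} {c : ℝ} (h : IsThreshold φ c) {s : ℝ} {b : Bool}
    (hs : b = φ s) : 0 ≤ aval b * (s - c) := by
  subst hs
  rcases lt_trichotomy s c with hlt | rfl | hgt
  · rw [h.2 s hlt]; simp [aval]; linarith
  · simp
  · rw [h.1 s hgt]; simp [aval]; linarith

lemma IsThreshold.ae_eq {φ : ℝ → Bool} {c : ℝ} (h : IsThreshold φ c) (b : Bool) :
    {s | b = φ s} =ᵐ[volume] halfLine b c := by
  have h0 : ∀ᵐ s : ℝ, s ≠ c := by simp [ae_iff]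
  filter_upwards [h0] with s hs
  refine propext ?_
  change b = φ s ↔ 0 < aval b * (s - c)
  rcases lt_or_gt_of_ne hs with hlt | hgt
  · rw [h.2 s hlt]; cases b <;> simp [aval] <;> linarith
  · rw [h.1 s hgt]; cases b <;> simp [aval] <;> linarith

lemma neg_halfLine (b : Bool) (c : ℝ) : -halfLine b c = halfLine (!b) (-c) := by
  ext s
  simp only [halfLine, Set.mem_neg, mem_ofPred_eq, aval_not]
  rw [show aval b * (-s - c) = -aval b * (s - -c) by ring]

lemma ae_eq_neg {S I : Set ℝ} (h : S =ᵐ[volume] I) : (-S : Set ℝ) =ᵐ[volume] (-I : Set ℝ) :=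
  (Measure.measurePreserving_neg (volume : Measure ℝ)).quasiMeasurePreserving.preimage_ae_eq h

/-- When the on-path type sets are mirror images, the myopic thresholds of the two players
are opposite. -/
lemma exists_threshold (M : Model) (hE1 : E1Holds M) (hsym : Symm M) {σ : Bool → Strat}
    {β : Belief} (hB : BayesOnPath M σ β) (hmyo : Myopic M σ β) {l : Hist} {I : Set ℝ}
    (hI : MeasurableSet I) (hpos : 0 < volume I)
    (ha : consSet (σ true) true l =ᵐ[volume] I)
    (hb : consSet (σ false) false l =ᵐ[volume] (-I : Set ℝ)) :
    ∃ c, IsThreshold (fun s => σ true s l) c ∧ IsThreshold (fun s => σ false s l) (-c) := by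
  have hpos' : 0 < volume (-I) := by simpa using hpos
  obtain ⟨hcont, hmono, htop, hbot⟩ := hE1 true (-I) hI.neg hpos'
  obtain ⟨c, hc⟩ : (0 : ℝ) ∈ range fun s => Epost M true s (-I) :=
    mem_range_of_exists_le_of_exists_ge hcont (hbot.exists.imp fun _ h => h.le)
      (htop.exists.imp fun _ h => h.le)
  have key : ∀ (i : Bool) (J : Set ℝ), MeasurableSet J → 0 < volume J →
      consSet (σ (!i)) (!i) l =ᵐ[volume] J → ∀ (s : ℝ) (z : Bool),
      0 < aval z * Epost M true s J → σ i s l = z := by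
    intro i J hJ hJpos hae s z hz
    refine myopic_act M hE1 hsym hB hmyo i s (hJ.nullMeasurableSet.congr hae.symm)
      (by rwa [measure_congr hae]) z ?_
    rw [setIntegral_congr_set hae]
    rw [Epost, ← mul_div_assoc] at hz
    exact (div_pos_iff_of_pos_right (den_pos M hE1 hsym s hJ.nullMeasurableSet hJpos)).1 hz
  have hE : ∀ s, Epost M true s I = - Epost M true (-s) (-I) := fun s => by
    rw [← Epost_neg M hsym, neg_neg]
  refine ⟨c, ⟨fun s hs => ?_, fun s hs => ?_⟩, ⟨fun s hs => ?_, fun s hs => ?_⟩⟩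
  · refine key true (-I) hI.neg hpos' hb s true ?_
    have := hmono hs
    simp only [aval] at *; simp at *; linarith
  · refine key true (-I) hI.neg hpos' hb s false ?_
    have := hmono hs
    simp only [aval] at *; simp at *; linarith
  · refine key false I hI hpos ha s true ?_
    have := hmono (show -s < c by linarith)
    rw [hE]
    simp only [aval] at *; simp at *; linarith
  · refine key false I hI hpos ha s false ?_
    have := hmono (show c < -s by linarith)
    rw [hE]
    simp only [aval] at *; simp at *; linarith

/-- As long as the players disagree, their on-path type sets stay mirror images. -/
lemma exists_mirror (M : Model) (hE1 : E1Holds M) (hsym : Symm M) {σ : Bool → Strat}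
    {β : Belief} (hB : BayesOnPath M σ β) (hmyo : Myopic M σ β) (l : Hist)
    (hl : ∀ p ∈ l, p.1 ≠ p.2) (hpos : ∀ i, 0 < volume (consSet (σ i) i l)) :
    ∃ I : Set ℝ, MeasurableSet I ∧ consSet (σ true) true l =ᵐ[volume] I ∧
      consSet (σ false) false l =ᵐ[volume] (-I : Set ℝ) := by
  induction l using List.reverseRecOn with
  | nil => exact ⟨univ, MeasurableSet.univ, by simp [consSet_nil], by simp [consSet_nil]⟩
  | append_singleton l p ih =>
    have hpos' : ∀ i, 0 < volume (consSet (σ i) i l) := fun i =>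
      (hpos i).trans_le (measure_mono (by rw [consSet_snoc]; exact inter_subset_left))
    obtain ⟨I, hI, ha, hb⟩ := ih (fun q hq => hl q (by simp [hq])) hpos'
    obtain ⟨c, hca, hcb⟩ := exists_threshold M hE1 hsym hB hmyo hI
      (by rw [← measure_congr ha]; exact hpos' true) ha hb
    have hp : p.2 = !p.1 := by
      have := hl p (by simp)
      rcases p with ⟨x, y⟩
      cases x <;> cases y <;> simp_all
    refine ⟨I ∩ halfLine p.1 c, hI.inter (measurableSet_halfLine _ _), ?_, ?_⟩
    · rw [consSet_snoc]
      exact ha.inter (hca.ae_eq p.1)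
    · rw [consSet_snoc, inter_neg, neg_halfLine, ← hp]
      exact hb.inter (hcb.ae_eq p.2)

/-! ### Agreement and its consequences -/

/-- `T` describes a situation of agreement on `z`: the types of the two players still possible
all satisfy `s_a + s_b ≥ 0` if `z` is `+1`, and `s_a + s_b ≤ 0` if `z` is `-1`. -/
structure Agreement (z : Bool) (T : Bool → Set ℝ) : Prop where
  meas : ∀ j, NullMeasurableSet (T j)
  pos : ∀ j, 0 < volume (T j)
  sign : ∀ i, ∀ s ∈ T i, ∀ r ∈ T (!i), 0 ≤ aval z * (s + r)

lemma agreement_of_common (M : Model) (hE1 : E1Holds M) (hsym : Symm M) {σ : Bool → Strat}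
    {β : Belief} (hB : BayesOnPath M σ β) (hmyo : Myopic M σ β) (l : Hist)
    (hl : ∀ p ∈ l, p.1 ≠ p.2) (z : Bool)
    (hpos : ∀ i, 0 < volume (consSet (σ i) i (l ++ [(z, z)]))) :
    Agreement z fun j => consSet (σ j) j (l ++ [(z, z)]) := by
  have hpos' : ∀ i, 0 < volume (consSet (σ i) i l) := fun i =>
    (hpos i).trans_le (measure_mono (by rw [consSet_snoc]; exact inter_subset_left))
  obtain ⟨I, hI, ha, hb⟩ := exists_mirror M hE1 hsym hB hmyo l hl hpos'
  obtain ⟨c, hca, hcb⟩ := exists_threshold M hE1 hsym hB hmyo hI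
    (by rw [← measure_congr ha]; exact hpos' true) ha hb
  have hna : NullMeasurableSet (consSet (σ true) true (l ++ [(z, z)])) := by
    rw [consSet_snoc]
    exact (hI.inter (measurableSet_halfLine z c)).nullMeasurableSet.congr
      (ha.inter (hca.ae_eq z)).symm
  have hnb : NullMeasurableSet (consSet (σ false) false (l ++ [(z, z)])) := by
    rw [consSet_snoc]
    exact (hI.neg.inter (measurableSet_halfLine z (-c))).nullMeasurableSet.congr
      (hb.inter (hcb.ae_eq z)).symm
  have hsa : ∀ s ∈ consSet (σ true) true (l ++ [(z, z)]), 0 ≤ aval z * (s - c) := by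
    intro s hs
    rw [consSet_snoc] at hs
    exact hca.nonneg hs.2
  have hsb : ∀ s ∈ consSet (σ false) false (l ++ [(z, z)]), 0 ≤ aval z * (s - -c) := by
    intro s hs
    rw [consSet_snoc] at hs
    exact hcb.nonneg hs.2
  refine ⟨fun j => by cases j <;> assumption, hpos, fun i s hs r hr => ?_⟩
  cases i
  · have := hsb s hs
    have := hsa r hr
    linarith
  · have := hsa s hs
    have := hsb r hr
    linarith

/-- Under agreement on `z`, action `z` is right even if both types were known. -/
lemma Agreement.ae_densX (M : Model) (hE1 : E1Holds M) (hsym : Symm M) {z : Bool}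
    {T : Bool → Set ℝ} (h : Agreement z T) {i : Bool} {s : ℝ} (hs : s ∈ T i) :
    ∀ᵐ r, r ∈ T (!i) → 0 < aval z * densX M true s r := by
  have h0 : ∀ᵐ r : ℝ, r ≠ -s := by simp [ae_iff]
  filter_upwards [h0, ae_pos M hE1 hsym s, ae_neg M hE1 hsym s] with r h0 h1 h2 hr
  have hne : s + r ≠ 0 := fun h => h0 (by linarith)
  have := h.sign i s hs r hr
  cases z
  · simp only [aval, Bool.false_eq_true, if_false] at *
    have := (h2 (lt_of_le_of_ne (by linarith) hne)).2
    linarith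
  · simp only [aval, if_true] at *
    have := (h1 (lt_of_le_of_ne (by linarith) hne.symm)).2
    linarith

lemma Agreement.act (M : Model) (hE1 : E1Holds M) (hsym : Symm M) {σ : Bool → Strat}
    {β : Belief} (hB : BayesOnPath M σ β) (hmyo : Myopic M σ β) {z : Bool}
    {T : Bool → Set ℝ} (h : Agreement z T) {l : Hist} (hl : ∀ j, consSet (σ j) j l = T j)
    {i : Bool} {s : ℝ} (hs : s ∈ T i) : σ i s l = z := by
  refine myopic_act M hE1 hsym hB hmyo i s (by rw [hl]; exact h.meas _)
    (by rw [hl]; exact h.pos _) z ?_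
  rw [hl, ← integral_const_mul]
  exact setIntegral_pos_of_ae (h.meas _) (h.pos _)
    ((integrable_all M hE1 hsym s).1.const_mul _).integrableOn (h.ae_densX M hE1 hsym hs)

/-- Under agreement nothing more is learnt: all remaining types keep playing `z`. -/
lemma Agreement.consSet_eq (M : Model) (hE1 : E1Holds M) (hsym : Symm M) {σ : Bool → Strat}
    {β : Belief} (hB : BayesOnPath M σ β) (hmyo : Myopic M σ β) {z : Bool}
    {T : Bool → Set ℝ} (h : Agreement z T) {l : Hist} (hl : ∀ j, consSet (σ j) j l = T j)
    (n : ℕ) : ∀ j, consSet (σ j) j (l ++ List.replicate n (z, z)) = T j := by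
  induction n with
  | zero => simpa using hl
  | succ n ih =>
    intro j
    rw [List.replicate_succ', ← List.append_assoc, consSet_snoc, ih j]
    refine inter_eq_left.2 fun s hs => ?_
    simp only [mem_ofPred_eq, ite_self]
    exact (h.act M hE1 hsym hB hmyo ih hs).symm

lemma Agreement.playFrom_eq (M : Model) (hE1 : E1Holds M) (hsym : Symm M) {σ : Bool → Strat}
    {β : Belief} (hB : BayesOnPath M σ β) (hmyo : Myopic M σ β) {z : Bool}
    {T : Bool → Set ℝ} (h : Agreement z T) {l : Hist} (hl : ∀ j, consSet (σ j) j l = T j)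
    {s : Bool → ℝ} (hs : ∀ j, s j ∈ T j) (n : ℕ) :
    playFrom σ s l n = l ++ List.replicate n (z, z) := by
  induction n with
  | zero => simp [playFrom]
  | succ n ih =>
    have hn := h.consSet_eq M hE1 hsym hB hmyo hl n
    simp only [playFrom, ih]
    rw [h.act M hE1 hsym hB hmyo hn (hs true), h.act M hE1 hsym hB hmyo hn (hs false),
      List.append_assoc, List.replicate_succ']

lemma Agreement.act_playFrom (M : Model) (hE1 : E1Holds M) (hsym : Symm M)
    {σ : Bool → Strat} {β : Belief} (hB : BayesOnPath M σ β) (hmyo : Myopic M σ β) {z : Bool}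
    {T : Bool → Set ℝ} (h : Agreement z T) {l : Hist} (hl : ∀ j, consSet (σ j) j l = T j)
    {s : Bool → ℝ} (hs : ∀ j, s j ∈ T j) (n : ℕ) (j : Bool) :
    σ j (s j) (playFrom σ s l n) = z := by
  rw [h.playFrom_eq M hE1 hsym hB hmyo hl hs]
  exact h.act M hE1 hsym hB hmyo (h.consSet_eq M hE1 hsym hB hmyo hl n) (hs j)

lemma aval_mul_le (a z : Bool) {w : ℝ} (h : 0 ≤ aval z * w) : aval a * w ≤ aval z * w := by
  cases a <;> cases z <;> simp [aval] at * <;> linarith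

/-- Under agreement playing `z` forever is optimal against each possible opponent type
separately, so no deviation is profitable, whatever the opponent's reaction to it reveals. -/
lemma Agreement.contPayoff_le (M : Model) (hE1 : E1Holds M) (hsym : Symm M)
    {σ : Bool → Strat} {β : Belief} (hB : BayesOnPath M σ β) (hmyo : Myopic M σ β) {z : Bool}
    {T : Bool → Set ℝ} (h : Agreement z T) {l : Hist} (hl : ∀ j, consSet (σ j) j l = T j)
    {i : Bool} {s : ℝ} (hs : s ∈ T i) (σ' : Strat) :
    contPayoff M i s l (Function.update σ i σ') (β i s l) ≤ contPayoff M i s l σ (β i s l) := by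
  set d : ℕ → ℝ := fun t => if ((l.length + t : ℕ) : ℕ∞) ≤ M.T then M.δ i ^ t else 0 with hd
  obtain ⟨hδ0, hδ1⟩ := M.δ_mem i
  have hd0 : ∀ t, 0 ≤ d t := fun t => by
    simp only [hd]; split_ifs
    · positivity
    · exact le_rfl
  have hdle : ∀ t, d t ≤ M.δ i ^ t := fun t => by
    simp only [hd]; split_ifs
    · exact le_rfl
    · positivity
  have hds : Summable d :=
    Summable.of_nonneg_of_le hd0 hdle (summable_geometric_of_lt_one hδ0.le hδ1)
  have hpay : ∀ τ : Bool → Strat, contPayoff M i s l τ (β i s l) =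
      ∫ r, β i s l r * ∑' t, d t *
        (aval (actOf τ (typPair i s r) l t i) * post2 M i s r) := by
    intro τ
    simp only [contPayoff, hd, ite_mul, zero_mul, mul_assoc]
  set Z := ∫ r in T (!i), dens M true s r with hZ
  have hZpos : 0 < Z := den_pos M hE1 hsym s (h.meas _) (h.pos _)
  have hβ : ∀ r, β i s l r = (T (!i)).indicator (dens M true s) r / Z := fun r => by
    rw [belief_eq M hE1 hsym hB i s (by rw [hl]; exact h.meas _) (by rw [hl]; exact h.pos _), hl]
  have hβ0 : ∀ r, 0 ≤ β i s l r := fun r => by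
    rw [hβ]
    exact div_nonneg (indicator_nonneg (fun r _ => dens_nonneg M s r) r) hZpos.le
  have hw : ∀ᵐ r, r ∈ T (!i) → 0 ≤ aval z * post2 M i s r := by
    filter_upwards [h.ae_densX M hE1 hsym hs] with r hr hrT
    rw [post2_eq M hsym, ← mul_div_assoc]
    exact div_nonneg (hr hrT).le (dens_nonneg M s r)
  have hact : ∀ r ∈ T (!i), ∀ t, actOf σ (typPair i s r) l t i = z := by
    intro r hr t
    have hty : ∀ j, typPair i s r j ∈ T j := by
      intro j
      cases i <;> cases j <;> simpa [typPair]
    have := h.act_playFrom M hE1 hsym hB hmyo hl hty t i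
    cases i <;> simpa [actOf] using this
  have hσ : ∀ r, β i s l r * ∑' t, d t *
        (aval (actOf σ (typPair i s r) l t i) * post2 M i s r) =
      β i s l r * ((∑' t, d t) * (aval z * post2 M i s r)) := by
    intro r
    by_cases hr : r ∈ T (!i)
    · simp only [hact r hr, tsum_mul_right]
    · simp [hβ, indicator_of_notMem hr]
  rw [hpay, hpay]
  simp only [hσ]
  have hnn : 0 ≤ᵐ[volume] fun r => β i s l r * ((∑' t, d t) * (aval z * post2 M i s r)) := by
    filter_upwards [hw] with r hr
    by_cases hrT : r ∈ T (!i)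
    · exact mul_nonneg (hβ0 r) (mul_nonneg (tsum_nonneg hd0) (hr hrT))
    · simp [hβ, indicator_of_notMem hrT]
  have hint : Integrable fun r => β i s l r * ((∑' t, d t) * (aval z * post2 M i s r)) := by
    have h1 : Integrable ((T (!i)).indicator (densX M true s)) :=
      (integrable_all M hE1 hsym s).1.indicator₀ (h.meas _)
    refine (h1.const_mul ((∑' t, d t) * aval z / Z)).congr ?_
    filter_upwards [ae_dens_pos M hE1 hsym s] with r hr
    rw [hβ, post2_eq M hsym]
    by_cases hrT : r ∈ T (!i)
    · simp only [indicator_of_mem hrT]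
      field_simp
    · simp [indicator_of_notMem hrT]
  -- An off-path reaction may be non-measurable in the opponent's type; the payoff of such a
  -- deviation is then the junk value `0`.
  by_cases hdev : Integrable fun r => β i s l r * ∑' t, d t *
      (aval (actOf (Function.update σ i σ') (typPair i s r) l t i) * post2 M i s r)
  · refine integral_mono_ae hdev hint ?_
    filter_upwards [hw] with r hr
    by_cases hrT : r ∈ T (!i)
    · refine mul_le_mul_of_nonneg_left ?_ (hβ0 r)
      rw [← tsum_mul_right]
      refine Summable.tsum_le_tsum
        (fun t => mul_le_mul_of_nonneg_left (aval_mul_le _ _ (hr hrT)) (hd0 t)) ?_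
        (hds.mul_right _)
      refine Summable.of_norm_bounded (hds.mul_right |post2 M i s r|) fun t => ?_
      rw [norm_mul, Real.norm_of_nonneg (hd0 t), norm_mul, Real.norm_eq_abs, Real.norm_eq_abs]
      refine mul_le_mul_of_nonneg_left (le_of_eq ?_) (hd0 t)
      cases actOf (Function.update σ i σ') (typPair i s r) l t i <;> simp [aval]
    · simp [hβ, indicator_of_notMem hrT]
  · rw [integral_undef hdev]
    exact integral_nonneg_of_ae hnn

/-- in the symmetric model, under the common belief that play is myopic,
consider any on-path `(t+1)`-history in which a common action `z` is played for the
first time at date `t`.  Then the myopic strategies prescribe the play of `z` at every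
date from `t+1` onward for both players (for all types consistent with the history), and
this continuation is a best response for each player regardless of the discount
factors. -/
theorem stmt19 (M : Model) (hE1 : E1Holds M) (hsym : Symm M)
    (σ : Bool → Strat) (β : Belief) (hB : BayesOnPath M σ β) (hmyo : Myopic M σ β)
    (t : ℕ) (h : Hist) (hlen : h.length = t + 1) (z : Bool)
    (hcommon : h.getD t (true, true) = (z, z))
    (hfirst : ∀ τ < t, (h.getD τ (true, true)).1 ≠ (h.getD τ (true, true)).2)
    (honpath : ∀ i : Bool, 0 < volume (consSet (σ i) i h)) :
    (∀ sa sb : ℝ,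
      consistentWith (σ true) true sa h → consistentWith (σ false) false sb h →
      ∀ k : ℕ,
        σ true sa (playFrom σ (typPair true sa sb) h k) = z ∧
        σ false sb (playFrom σ (typPair true sa sb) h k) = z) ∧
    (∀ (i : Bool) (si : ℝ), consistentWith (σ i) i si h →
      ∀ σ' : Strat,
        contPayoff M i si h (Function.update σ i σ') (β i si h) ≤
          contPayoff M i si h σ (β i si h)) := by
  obtain ⟨l, rfl, hllen⟩ : ∃ l : Hist, h = l ++ [(z, z)] ∧ l.length = t := by
    refine ⟨h.take t, ?_, by simp [hlen]⟩
    have ht : t < h.length := by omega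
    rw [List.getD_eq_getElem _ _ ht] at hcommon
    rw [← hcommon, List.take_concat_get' h t ht, List.take_of_length_le hlen.le]
  have hl : ∀ p ∈ l, p.1 ≠ p.2 := by
    intro p hp
    obtain ⟨τ, hτ, rfl⟩ := List.mem_iff_getElem.1 hp
    have := hfirst τ (by omega)
    rwa [List.getD_append _ _ _ _ hτ, List.getD_eq_getElem _ _ hτ] at this
  have hA := agreement_of_common M hE1 hsym hB hmyo l hl z honpath
  refine ⟨fun sa sb ha hb k => ?_, fun i si hsi σ' =>
    hA.contPayoff_le M hE1 hsym hB hmyo (fun _ => rfl) hsi σ'⟩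
  have hty : ∀ j, typPair true sa sb j ∈ consSet (σ j) j (l ++ [(z, z)]) := by
    intro j
    cases j <;> simpa [typPair, consSet]
  exact ⟨hA.act_playFrom M hE1 hsym hB hmyo (fun _ => rfl) hty k true,
    hA.act_playFrom M hE1 hsym hB hmyo (fun _ => rfl) hty k false⟩
end
end
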